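/- arXiv:2602.17233 — 6 statements merged into one kernel-verified Lean document; each statement's English description precedes it below -/
import Mathlib

section
/- Let n, ν ∈ ℝ³ be unit vectors, let s₀, s₁, s₂ ∈ ℝ, and set Q := s₀ (n nᵀ − (1/3) I₃). Then f_S(Q) = s₁ s₀² (n ⋅ ν)². In particular, if s₁ > 0 and s₀ ≠ 0, then f_S(Q) = 0 if and only if n ⋅ ν = 0. -/
open Matrix

/-- Frobenius norm of a real 3×3 matrix: `‖A‖ = √(tr(Aᵀ A))`. -/
noncomputable def frobNorm (A : Matrix (Fin 3) (Fin 3) ℝ) : ℝ :=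
  Real.sqrt (Matrix.trace (Aᵀ * A))

/-- Surface energy density `f_S(Q) = s₁ ‖Q^{(s₀)} − P Q^{(s₀)}‖² + s₂ (‖Q^{(s₀)}‖² − s₀²)²`,
where `Q^{(s₀)} = Q + (s₀/3) I₃` and `P = I₃ − ν νᵀ`. -/
noncomputable def fS (s₀ s₁ s₂ : ℝ) (ν : Fin 3 → ℝ) (Q : Matrix (Fin 3) (Fin 3) ℝ) : ℝ :=
  s₁ * frobNorm ((Q + (s₀ / 3) • (1 : Matrix (Fin 3) (Fin 3) ℝ)) -
      ((1 : Matrix (Fin 3) (Fin 3) ℝ) - vecMulVec ν ν) *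
        (Q + (s₀ / 3) • (1 : Matrix (Fin 3) (Fin 3) ℝ))) ^ 2 +
  s₂ * (frobNorm (Q + (s₀ / 3) • (1 : Matrix (Fin 3) (Fin 3) ℝ)) ^ 2 - s₀ ^ 2) ^ 2

/-!
For uniaxial `Q` the shift cancels the trace correction, so `Q^{(s₀)} = s₀ n nᵀ` has rank one. Its
squared Frobenius norm is `s₀²`, which kills the `s₂` term. Its normal part
`Q^{(s₀)} - P Q^{(s₀)} = ν νᵀ Q^{(s₀)} = s₀ (n ⋅ ν) ν nᵀ` has rank at most one as well, with squared
norm `s₀² (n ⋅ ν)²`.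
-/

section VecMulVec

variable {m n R : Type*} [Fintype m]

theorem trace_transpose_mul_self_vecMulVec [Fintype n] [CommSemiring R] (a : m → R) (b : n → R) :
    trace ((vecMulVec a b)ᵀ * vecMulVec a b) = (a ⬝ᵥ a) * (b ⬝ᵥ b) := by
  rw [transpose_vecMulVec, vecMulVec_mul_vecMulVec, trace_vecMulVec, dotProduct_smul, smul_eq_mul]

theorem sub_one_sub_vecMulVec_mul [DecidableEq m] [Ring R] (u v : m → R) (A : Matrix m n R) :
    A - (1 - vecMulVec u v) * A = vecMulVec u (v ᵥ* A) := by
  rw [Matrix.sub_mul, Matrix.one_mul, sub_sub_cancel, vecMulVec_mul]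

end VecMulVec

theorem frobNorm_sq (A : Matrix (Fin 3) (Fin 3) ℝ) : frobNorm A ^ 2 = trace (Aᵀ * A) :=
  Real.sq_sqrt (posSemidef_conjTranspose_mul_self A).trace_nonneg

theorem frobNorm_smul_sq (c : ℝ) (A : Matrix (Fin 3) (Fin 3) ℝ) :
    frobNorm (c • A) ^ 2 = c ^ 2 * frobNorm A ^ 2 := by
  rw [frobNorm_sq, frobNorm_sq, transpose_smul, smul_mul_smul_comm, trace_smul, smul_eq_mul, sq]

theorem frobNorm_vecMulVec_sq (a b : Fin 3 → ℝ) :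
    frobNorm (vecMulVec a b) ^ 2 = (a ⬝ᵥ a) * (b ⬝ᵥ b) := by
  rw [frobNorm_sq, trace_transpose_mul_self_vecMulVec]

theorem fS_smul_sub_third_smul_one (s₀ s₁ s₂ : ℝ) (ν : Fin 3 → ℝ) (A : Matrix (Fin 3) (Fin 3) ℝ) :
    fS s₀ s₁ s₂ ν (s₀ • (A - (1 / 3 : ℝ) • 1)) =
      s₁ * frobNorm (s₀ • A - (1 - vecMulVec ν ν) * (s₀ • A)) ^ 2 +
        s₂ * (frobNorm (s₀ • A) ^ 2 - s₀ ^ 2) ^ 2 := by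
  rw [fS, smul_sub, smul_smul, mul_one_div, sub_add_cancel]

theorem fS_uniaxial {n ν : Fin 3 → ℝ} (hn : n ⬝ᵥ n = 1) (hν : ν ⬝ᵥ ν = 1) (s₀ s₁ s₂ : ℝ) :
    fS s₀ s₁ s₂ ν (s₀ • (vecMulVec n n - (1 / 3 : ℝ) • 1)) = s₁ * s₀ ^ 2 * (n ⬝ᵥ ν) ^ 2 := by
  have normal_part : s₀ • vecMulVec n n - (1 - vecMulVec ν ν) * (s₀ • vecMulVec n n) =
      (s₀ * (n ⬝ᵥ ν)) • vecMulVec ν n := by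
    rw [sub_one_sub_vecMulVec_mul, vecMul_smul, vecMul_vecMulVec, smul_smul, vecMulVec_smul,
      dotProduct_comm]
  have normal_part_sq : frobNorm ((s₀ * (n ⬝ᵥ ν)) • vecMulVec ν n) ^ 2 =
      s₀ ^ 2 * (n ⬝ᵥ ν) ^ 2 := by
    rw [frobNorm_smul_sq, frobNorm_vecMulVec_sq, hn, hν, mul_one, mul_one, mul_pow]
  have shifted_sq : frobNorm (s₀ • vecMulVec n n) ^ 2 = s₀ ^ 2 := by
    rw [frobNorm_smul_sq, frobNorm_vecMulVec_sq, hn, mul_one, mul_one]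
  rw [fS_smul_sub_third_smul_one, normal_part, normal_part_sq, shifted_sq]
  ring

theorem stmt_1 (n ν : Fin 3 → ℝ) (hn : n ⬝ᵥ n = 1) (hν : ν ⬝ᵥ ν = 1) (s₀ s₁ s₂ : ℝ)
    (Q : Matrix (Fin 3) (Fin 3) ℝ)
    (hQ : Q = s₀ • (vecMulVec n n - (1 / 3 : ℝ) • (1 : Matrix (Fin 3) (Fin 3) ℝ))) :
    fS s₀ s₁ s₂ ν Q = s₁ * s₀ ^ 2 * (n ⬝ᵥ ν) ^ 2 ∧
      (0 < s₁ → s₀ ≠ 0 → (fS s₀ s₁ s₂ ν Q = 0 ↔ n ⬝ᵥ ν = 0)) := by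
  rw [hQ, fS_uniaxial hn hν]
  refine ⟨rfl, fun hs₁ hs₀ => ?_⟩
  have coeff_ne_zero : s₁ * s₀ ^ 2 ≠ 0 := mul_ne_zero hs₁.ne' (pow_ne_zero 2 hs₀)
  rw [mul_eq_zero_iff_left coeff_ne_zero, sq_eq_zero_iff]
end

section
/- For all real parameters s₀, s₁, s₂ > 0 there exists k₁ > 0 such that for every unit vector ν ∈ ℝ³ and every real symmetric traceless 3×3 matrix Q with ‖Q‖ > k₁, one has f_S(Q) > f_S( (k₁/‖Q‖) Q ). -/
open Matrix

/-!
Since `t ↦ ‖t • x + c‖` is convex, its chord from any `t ∈ [0, 1)` to `1` has slope at least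
`‖x‖ - 2 * ‖c‖`, whereas `t ↦ ‖L (t • x + c)‖` is `‖x‖`-Lipschitz for every linear contraction `L`.
Hence, far from the origin, the growth of the quartic well `(‖x + c‖ ^ 2 - m) ^ 2` along a ray beats
any change of the quadratic term `‖L (x + c)‖ ^ 2`, uniformly in `L`. For `f_S` the contraction is
left multiplication by `ν νᵀ`, whose Frobenius norm is `1`.
-/

section MonotonicityRadius

variable {E : Type*} [SeminormedAddCommGroup E]

/-- A radius, independent of `L`, outside of which `x ↦ a ‖L (x + c)‖² + b (‖x + c‖² - m)²` is
strictly increasing along rays when `0 < b` and `L` is a linear contraction. It is not optimal. -/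
noncomputable def monotonicityRadius (c : E) (a b m : ℝ) : ℝ :=
  4 * ‖c‖ + |m| + |a| / b + 1

lemma monotonicityRadius_pos (c : E) (a m : ℝ) {b : ℝ} (hb : 0 ≤ b) :
    0 < monotonicityRadius c a b m := by
  unfold monotonicityRadius
  positivity

lemma add_le_norm_add_sq_of_monotonicityRadius_le {x c : E} {a b m : ℝ} (hb : 0 ≤ b)
    (hx : monotonicityRadius c a b m ≤ ‖x‖) : m + (|a| / b + 1) ≤ ‖x + c‖ ^ 2 := by
  unfold monotonicityRadius at hx
  have base_ge_one : 1 ≤ |m| + |a| / b + 1 := by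
    linarith [abs_nonneg m, div_nonneg (abs_nonneg a) hb]
  calc m + (|a| / b + 1) ≤ |m| + |a| / b + 1 := by linarith [le_abs_self m]
    _ ≤ (|m| + |a| / b + 1) ^ 2 := le_self_pow₀ base_ge_one two_ne_zero
    _ ≤ ‖x + c‖ ^ 2 := by
      gcongr
      linarith [norm_le_add_norm_add x c, norm_nonneg c]

end MonotonicityRadius

section AnchoringEnergy

variable {E F : Type*} [SeminormedAddCommGroup E] [NormedSpace ℝ E]
  [SeminormedAddCommGroup F] [NormedSpace ℝ F]

lemma mul_norm_sub_le_norm_add_sub_norm_smul_add (x c : E) {t : ℝ} (ht₀ : 0 ≤ t) (ht₁ : t ≤ 1) :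
    (1 - t) * (‖x‖ - 2 * ‖c‖) ≤ ‖x + c‖ - ‖t • x + c‖ := by
  have convexity : ‖t • x + c‖ ≤ t * ‖x + c‖ + (1 - t) * ‖c‖ :=
    calc ‖t • x + c‖ = ‖t • (x + c) + (1 - t) • c‖ := by congr 1; module
      _ ≤ ‖t • (x + c)‖ + ‖(1 - t) • c‖ := norm_add_le _ _
      _ = t * ‖x + c‖ + (1 - t) * ‖c‖ := by
        rw [norm_smul_of_nonneg ht₀, norm_smul_of_nonneg (sub_nonneg.2 ht₁)]
  have triangle : ‖x‖ - 2 * ‖c‖ ≤ ‖x + c‖ - ‖c‖ := by linarith [norm_le_add_norm_add x c]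
  linarith [mul_le_mul_of_nonneg_left triangle (sub_nonneg.2 ht₁)]

lemma abs_norm_add_sub_norm_smul_add_le (x c : E) {t : ℝ} (ht₁ : t ≤ 1) :
    |‖x + c‖ - ‖t • x + c‖| ≤ (1 - t) * ‖x‖ :=
  calc |‖x + c‖ - ‖t • x + c‖| ≤ ‖(x + c) - (t • x + c)‖ := abs_norm_sub_norm_le _ _
    _ = ‖(1 - t) • x‖ := by congr 1; module
    _ = (1 - t) * ‖x‖ := norm_smul_of_nonneg (sub_nonneg.2 ht₁) x

lemma abs_norm_map_add_sq_sub_norm_map_smul_add_sq_le {L : E →ₗ[ℝ] F} (hL : ∀ v, ‖L v‖ ≤ ‖v‖)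
    (x c : E) {t : ℝ} (ht₁ : t ≤ 1) :
    |‖L (x + c)‖ ^ 2 - ‖L (t • x + c)‖ ^ 2| ≤
      (1 - t) * ‖x‖ * (‖x + c‖ + ‖t • x + c‖) := by
  have lipschitz : |‖L (x + c)‖ - ‖L (t • x + c)‖| ≤ (1 - t) * ‖x‖ := by
    simp only [map_add, map_smul]
    exact (abs_norm_add_sub_norm_smul_add_le (L x) (L c) ht₁).trans
      (mul_le_mul_of_nonneg_left (hL x) (sub_nonneg.2 ht₁))
  rw [sq_sub_sq, mul_comm, abs_mul,
    abs_of_nonneg (add_nonneg (norm_nonneg (L (x + c))) (norm_nonneg (L (t • x + c))))]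
  exact mul_le_mul lipschitz (add_le_add (hL _) (hL _)) (by positivity)
    ((abs_nonneg _).trans lipschitz)

lemma mul_le_quarticWell_sub_quarticWell_smul {x c : E} {t m r : ℝ} (ht₀ : 0 ≤ t) (ht₁ : t ≤ 1)
    (hc : 4 * ‖c‖ ≤ ‖x‖) (hr : 0 ≤ r) (hx : m + r ≤ ‖x + c‖ ^ 2)
    (htx : m + r ≤ ‖t • x + c‖ ^ 2) :
    (1 - t) * ‖x‖ * (‖x + c‖ + ‖t • x + c‖) * r ≤
      (‖x + c‖ ^ 2 - m) ^ 2 - (‖t • x + c‖ ^ 2 - m) ^ 2 := by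
  have slope : (1 - t) * (‖x‖ / 2) ≤ ‖x + c‖ - ‖t • x + c‖ :=
    (mul_le_mul_of_nonneg_left (by linarith) (sub_nonneg.2 ht₁)).trans
      (mul_norm_sub_le_norm_add_sub_norm_smul_add x c ht₀ ht₁)
  have slope_nonneg : 0 ≤ (1 - t) * (‖x‖ / 2) :=
    mul_nonneg (sub_nonneg.2 ht₁) (by positivity)
  have depth : 2 * r ≤ ‖x + c‖ ^ 2 + ‖t • x + c‖ ^ 2 - 2 * m := by linarith
  calc (1 - t) * ‖x‖ * (‖x + c‖ + ‖t • x + c‖) * r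
      = (1 - t) * (‖x‖ / 2) * (2 * r) * (‖x + c‖ + ‖t • x + c‖) := by ring
    _ ≤ (‖x + c‖ - ‖t • x + c‖) * (‖x + c‖ ^ 2 + ‖t • x + c‖ ^ 2 - 2 * m) *
          (‖x + c‖ + ‖t • x + c‖) :=
        mul_le_mul_of_nonneg_right
          (mul_le_mul slope depth (by positivity) (slope_nonneg.trans slope)) (by positivity)
    _ = (‖x + c‖ ^ 2 - m) ^ 2 - (‖t • x + c‖ ^ 2 - m) ^ 2 := by ring

/-- The energy `x ↦ a ‖L (x + c)‖² + b (‖x + c‖² - m)²` on a normed space, an abstract form of the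
surface energy density: `c` is the shift `(s₀/3) I₃` and `L` measures the normal part. -/
noncomputable def anchoringEnergy (L : E →ₗ[ℝ] F) (c : E) (a b m : ℝ) (x : E) : ℝ :=
  a * ‖L (x + c)‖ ^ 2 + b * (‖x + c‖ ^ 2 - m) ^ 2

theorem anchoringEnergy_smul_lt {L : E →ₗ[ℝ] F} (hL : ∀ v, ‖L v‖ ≤ ‖v‖) {x c : E}
    {a b m t : ℝ} (hb : 0 < b) (ht₀ : 0 ≤ t) (ht₁ : t < 1)
    (hx : monotonicityRadius c a b m ≤ ‖t • x‖) :
    anchoringEnergy L c a b m (t • x) < anchoringEnergy L c a b m x := by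
  have radius_le_norm : monotonicityRadius c a b m ≤ ‖x‖ := by
    refine hx.trans ?_
    rw [norm_smul_of_nonneg ht₀]
    exact mul_le_of_le_one_left (norm_nonneg x) ht₁.le
  have norm_pos : 0 < ‖x‖ := (monotonicityRadius_pos c a m hb.le).trans_le radius_le_norm
  have shift_le : 4 * ‖c‖ ≤ ‖x‖ := by
    unfold monotonicityRadius at radius_le_norm
    linarith [abs_nonneg m, div_nonneg (abs_nonneg a) hb.le]
  set w := (1 - t) * ‖x‖ * (‖x + c‖ + ‖t • x + c‖)
  have weight_pos : 0 < w := by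
    have : 0 < ‖x + c‖ := by linarith [norm_le_add_norm_add x c, norm_nonneg c]
    have : 0 < 1 - t := sub_pos.2 ht₁
    positivity
  have quadratic : -(|a| * w) ≤ a * (‖L (x + c)‖ ^ 2 - ‖L (t • x + c)‖ ^ 2) := by
    refine neg_le_of_abs_le ?_
    rw [abs_mul]
    exact mul_le_mul_of_nonneg_left
      (abs_norm_map_add_sq_sub_norm_map_smul_add_sq_le hL x c ht₁.le) (abs_nonneg a)
  have quartic : b * (w * (|a| / b + 1)) ≤
      b * ((‖x + c‖ ^ 2 - m) ^ 2 - (‖t • x + c‖ ^ 2 - m) ^ 2) :=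
    mul_le_mul_of_nonneg_left
      (mul_le_quarticWell_sub_quarticWell_smul ht₀ ht₁.le shift_le (by positivity)
        (add_le_norm_add_sq_of_monotonicityRadius_le hb.le radius_le_norm)
        (add_le_norm_add_sq_of_monotonicityRadius_le hb.le hx)) hb.le
  have quartic_weight : b * (w * (|a| / b + 1)) = |a| * w + b * w := by field_simp
  unfold anchoringEnergy
  linarith [mul_pos hb weight_pos]

end AnchoringEnergy

section Frobenius

open scoped Matrix.Norms.Frobenius

lemma frobenius_norm_eq_sqrt_trace {m n : Type*} [Fintype m] [Fintype n] (A : Matrix m n ℝ) :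
    ‖A‖ = √(trace (Aᵀ * A)) := by
  rw [frobenius_norm_def, Real.sqrt_eq_rpow, Finset.sum_comm]
  simp [trace, mul_apply, sq]

lemma frobenius_norm_vecMulVec_self {n : Type*} [Fintype n] (v : n → ℝ) :
    ‖vecMulVec v v‖ = v ⬝ᵥ v := by
  have trace_eq : trace ((vecMulVec v v)ᵀ * vecMulVec v v) = (v ⬝ᵥ v) ^ 2 := by
    simp [transpose_vecMulVec, vecMulVec_mul_vecMulVec, trace_vecMulVec, sq]
  have dot_nonneg : 0 ≤ v ⬝ᵥ v := by simpa using dotProduct_star_self_nonneg v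
  rw [frobenius_norm_eq_sqrt_trace, trace_eq, Real.sqrt_sq dot_nonneg]

lemma frobNorm_eq_norm (A : Matrix (Fin 3) (Fin 3) ℝ) : frobNorm A = ‖A‖ :=
  (frobenius_norm_eq_sqrt_trace A).symm

lemma fS_eq_anchoringEnergy (s₀ s₁ s₂ : ℝ) (ν : Fin 3 → ℝ) :
    fS s₀ s₁ s₂ ν =
      anchoringEnergy (LinearMap.mulLeft ℝ (vecMulVec ν ν)) ((s₀ / 3) • 1) s₁ s₂ (s₀ ^ 2) := by
  ext Q
  simp only [fS, anchoringEnergy, frobNorm_eq_norm, LinearMap.mulLeft_apply, Matrix.sub_mul,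
    Matrix.one_mul, sub_sub_cancel]

theorem stmt_3_general (s₀ s₁ s₂ : ℝ) (hs₂ : 0 < s₂) :
    ∃ k₁ : ℝ, 0 < k₁ ∧ ∀ ν : Fin 3 → ℝ, ν ⬝ᵥ ν = 1 →
      ∀ Q : Matrix (Fin 3) (Fin 3) ℝ, k₁ < frobNorm Q →
        fS s₀ s₁ s₂ ν ((k₁ / frobNorm Q) • Q) < fS s₀ s₁ s₂ ν Q := by
  set k := monotonicityRadius ((s₀ / 3) • (1 : Matrix (Fin 3) (Fin 3) ℝ)) s₁ s₂ (s₀ ^ 2)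
  have k_pos : 0 < k := monotonicityRadius_pos _ _ _ hs₂.le
  refine ⟨k, k_pos, fun ν hν Q hQ ↦ ?_⟩
  rw [frobNorm_eq_norm] at hQ ⊢
  have norm_pos : 0 < ‖Q‖ := k_pos.trans hQ
  have ratio_nonneg : 0 ≤ k / ‖Q‖ := by positivity
  have contraction (A : Matrix (Fin 3) (Fin 3) ℝ) :
      ‖LinearMap.mulLeft ℝ (vecMulVec ν ν) A‖ ≤ ‖A‖ := by
    simpa [frobenius_norm_vecMulVec_self, hν] using frobenius_norm_mul (vecMulVec ν ν) A
  have norm_rescaled : ‖(k / ‖Q‖) • Q‖ = k := by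
    rw [norm_smul_of_nonneg ratio_nonneg, div_mul_cancel₀ _ norm_pos.ne']
  rw [fS_eq_anchoringEnergy]
  exact anchoringEnergy_smul_lt contraction hs₂ ratio_nonneg ((div_lt_one norm_pos).2 hQ)
    norm_rescaled.ge

end Frobenius

theorem stmt_3 (s₀ s₁ s₂ : ℝ) (hs₀ : 0 < s₀) (hs₁ : 0 < s₁) (hs₂ : 0 < s₂) :
    ∃ k₁ : ℝ, 0 < k₁ ∧ ∀ ν : Fin 3 → ℝ, ν ⬝ᵥ ν = 1 →
      ∀ Q : Matrix (Fin 3) (Fin 3) ℝ, Qᵀ = Q → Matrix.trace Q = 0 → k₁ < frobNorm Q →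
        fS s₀ s₁ s₂ ν ((k₁ / frobNorm Q) • Q) < fS s₀ s₁ s₂ ν Q := by
  obtain ⟨k₁, k₁_pos, energy_lt⟩ := stmt_3_general s₀ s₁ s₂ hs₂
  exact ⟨k₁, k₁_pos, fun ν hν Q _ _ ↦ energy_lt ν hν Q⟩
end

section
/- Let m ≥ 1, ρ > 0, q ∈ ℝᵐ, and let u : ℝ² → ℝᵐ be harmonic on an open set containing the closed disk of radius ρ centered at the origin. Then ( ∫_{D_ρ} ‖Du(x)‖²_HS dx )² ≤ [ (1/ρ) ∫₀^{2π} ‖(d/dθ) u(ρ cos θ, ρ sin θ)‖² dθ ] · [ ρ ∫₀^{2π} ‖u(ρ cos θ, ρ sin θ) − q‖² dθ ]. -/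
open MeasureTheory

/-- The point `(ρ cos θ, ρ sin θ)` of the circle of radius `ρ` in `ℝ²`. -/
noncomputable def circlePt (ρ θ : ℝ) : EuclideanSpace ℝ (Fin 2) :=
  EuclideanSpace.single 0 (ρ * Real.cos θ) + EuclideanSpace.single 1 (ρ * Real.sin θ)

/-!
Green's identity writes the energy of a harmonic `u` on the disk as the boundary integral of
`⟪u - q, r ∂ᵣu⟫`, to which the Cauchy–Schwarz inequality applies. This produces the radial
derivative of `u` on the circle rather than the tangential one, but the two have the same `L²` norm
there: the field `2 ⟪x · ∇u, ∂ᵢu⟫ - xᵢ |∇u|²` is divergence free in the plane when `u` is harmonic,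
and its flux through the circle is the difference of the two norms.
-/

section

open Metric Real Set
open scoped InnerProductSpace Laplacian

local notation "𝐞[" i "]" => EuclideanSpace.single i (1 : ℝ)
local notation "ℝ²" => EuclideanSpace ℝ (Fin 2)

theorem sq_integral_inner_le {α F : Type*} [MeasurableSpace α] [NormedAddCommGroup F]
    [InnerProductSpace ℝ F] {μ : Measure α} {f g : α → F} (hf : MemLp f 2 μ) (hg : MemLp g 2 μ) :
    (∫ a, ⟪f a, g a⟫_ℝ ∂μ) ^ 2 ≤ (∫ a, ‖f a‖ ^ 2 ∂μ) * ∫ a, ‖g a‖ ^ 2 ∂μ := by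
  have inner_toLp {f g : α → F} (hf : MemLp f 2 μ) (hg : MemLp g 2 μ) :
      ⟪hf.toLp f, hg.toLp g⟫_ℝ = ∫ a, ⟪f a, g a⟫_ℝ ∂μ := by
    rw [L2.inner_def]
    refine integral_congr_ae ?_
    filter_upwards [hf.coeFn_toLp, hg.coeFn_toLp] with a hfa hga
    rw [hfa, hga]
  have cauchy_schwarz := real_inner_mul_inner_self_le (hf.toLp f) (hg.toLp g)
  simpa only [inner_toLp, real_inner_self_eq_norm_sq, ← sq] using cauchy_schwarz

theorem memLp_restrict_Ioc_of_continuous {E : Type*} [NormedAddCommGroup E] {f : ℝ → E}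
    (hf : Continuous f) (a b : ℝ) (p : ENNReal) : MemLp f p (volume.restrict (Ioc a b)) := by
  obtain ⟨C, hC⟩ := isCompact_Icc.exists_bound_of_continuousOn (s := Icc a b) hf.continuousOn
  exact .of_bound hf.aestronglyMeasurable C
    (ae_restrict_of_forall_mem measurableSet_Ioc fun x hx ↦ hC x (Ioc_subset_Icc_self hx))

section Coordinates

variable {ι F : Type*} [Fintype ι] [DecidableEq ι] [NormedAddCommGroup F]
  [NormedSpace ℝ F]

theorem sum_smul_clm_apply_single (L : EuclideanSpace ℝ ι →L[ℝ] F)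
    (x : EuclideanSpace ℝ ι) : ∑ i, x i • L 𝐞[i] = L x := by
  conv_rhs => rw [← (EuclideanSpace.basisFun ι ℝ).sum_repr x]
  simp [map_sum]

theorem laplacian_eq_sum_fderiv_fderiv (u : EuclideanSpace ℝ ι → F)
    (x : EuclideanSpace ℝ ι) : Δ u x = ∑ i, fderiv ℝ (fderiv ℝ u) x 𝐞[i] 𝐞[i] := by
  rw [InnerProductSpace.laplacian_eq_iteratedFDeriv_orthonormalBasis u
    (EuclideanSpace.basisFun ι ℝ)]
  simp [iteratedFDeriv_two_apply]

end Coordinates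

section SecondDerivative

variable {E F : Type*} [NormedAddCommGroup E] [NormedSpace ℝ E] [NormedAddCommGroup F]
  [NormedSpace ℝ F] {u : E → F} {x : E}

theorem contDiffAt_fderiv (hu : ContDiffAt ℝ 2 u x) : ContDiffAt ℝ 1 (fderiv ℝ u) x :=
  hu.fderiv_right (by norm_num)

theorem differentiableAt_fderiv (hu : ContDiffAt ℝ 2 u x) : DifferentiableAt ℝ (fderiv ℝ u) x :=
  (contDiffAt_fderiv hu).differentiableAt one_ne_zero

theorem contDiffAt_fderiv_apply_const (hu : ContDiffAt ℝ 2 u x) (v : E) :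
    ContDiffAt ℝ 1 (fun y ↦ fderiv ℝ u y v) x :=
  (contDiffAt_fderiv hu).clm_apply contDiffAt_const

theorem fderiv_fderiv_apply_const (hu : ContDiffAt ℝ 2 u x) (v w : E) :
    fderiv ℝ (fun y ↦ fderiv ℝ u y v) x w = fderiv ℝ (fderiv ℝ u) x w v := by
  rw [fderiv_clm_apply (differentiableAt_fderiv hu) (differentiableAt_const v)]
  simp

end SecondDerivative

@[simp]
theorem circlePt_apply_zero (r θ : ℝ) : circlePt r θ 0 = r * cos θ := by
  simp [circlePt]

@[simp]
theorem circlePt_apply_one (r θ : ℝ) : circlePt r θ 1 = r * sin θ := by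
  simp [circlePt]

theorem norm_circlePt (r θ : ℝ) : ‖circlePt r θ‖ = |r| := by
  rw [EuclideanSpace.norm_eq, ← sqrt_sq_eq_abs]
  congr 1
  simp only [norm_eq_abs, sq_abs, Fin.sum_univ_two, circlePt_apply_zero, circlePt_apply_one]
  linear_combination r ^ 2 * cos_sq_add_sin_sq θ

theorem smul_circlePt_one (r θ : ℝ) : r • circlePt 1 θ = circlePt r θ := by
  ext i
  fin_cases i <;> simp

theorem circlePt_frame_expansion_single (θ : ℝ) (i : Fin 2) :
    circlePt 1 θ i • circlePt 1 θ +
      circlePt 1 (θ + π / 2) i • circlePt 1 (θ + π / 2) = 𝐞[i] := by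
  ext j
  fin_cases i <;> fin_cases j <;>
    simp [cos_add_pi_div_two, sin_add_pi_div_two] <;> grind [cos_sq_add_sin_sq θ]

theorem circlePt_add_pi (r θ : ℝ) : circlePt r (θ + π) = -circlePt r θ := by
  ext i
  fin_cases i <;> simp

theorem circlePt_periodic (r : ℝ) : Function.Periodic (circlePt r) (2 * π) := fun θ ↦ by
  rw [two_mul, ← add_assoc, circlePt_add_pi, circlePt_add_pi, neg_neg]

theorem hasStrictFDerivAt_circlePt (p : ℝ × ℝ) :
    HasStrictFDerivAt (fun p : ℝ × ℝ ↦ circlePt p.1 p.2)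
      ((ContinuousLinearMap.fst ℝ ℝ ℝ).smulRight (circlePt 1 p.2) +
        (ContinuousLinearMap.snd ℝ ℝ ℝ).smulRight (circlePt p.1 (p.2 + π / 2))) p := by
  rw [hasStrictFDerivAt_euclidean]
  intro i
  fin_cases i
  · simp only [Fin.zero_eta, circlePt_apply_zero]
    refine (hasStrictFDerivAt_fst.fun_mul hasStrictFDerivAt_snd.cos).congr_fderiv ?_
    ext <;> simp [cos_add_pi_div_two]
  · simp only [Fin.mk_one, circlePt_apply_one]
    refine (hasStrictFDerivAt_fst.fun_mul hasStrictFDerivAt_snd.sin).congr_fderiv ?_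
    ext <;> simp [sin_add_pi_div_two]

theorem hasDerivAt_circlePt (r θ : ℝ) : HasDerivAt (circlePt r) (circlePt r (θ + π / 2)) θ := by
  simpa [Function.comp_def] using (hasStrictFDerivAt_circlePt (r, θ)).hasFDerivAt.comp_hasDerivAt θ
    ((hasDerivAt_const θ r).prodMk (hasDerivAt_id θ))

theorem hasFDerivAt_circlePt_snd_add (r a : ℝ) (p : ℝ × ℝ) :
    HasFDerivAt (fun p : ℝ × ℝ ↦ circlePt r (p.2 + a))
      ((ContinuousLinearMap.snd ℝ ℝ ℝ).smulRight (circlePt r (p.2 + a + π / 2))) p := by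
  exact (hasDerivAt_circlePt r (p.2 + a)).hasFDerivAt.comp p (hasFDerivAt_snd.add_const a)

theorem continuous_circlePt : Continuous fun p : ℝ × ℝ ↦ circlePt p.1 p.2 :=
  continuous_iff_continuousAt.2 fun p ↦ (hasStrictFDerivAt_circlePt p).continuousAt

theorem continuous_circlePt_right (r : ℝ) : Continuous (circlePt r) :=
  continuous_circlePt.comp (Continuous.prodMk_right r)

theorem norm_sq_clm_circlePt_add {F : Type*} [NormedAddCommGroup F] [InnerProductSpace ℝ F]
    (L : ℝ² →L[ℝ] F) (r θ : ℝ) :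
    ‖L (circlePt r θ)‖ ^ 2 + ‖L (circlePt r (θ + π / 2))‖ ^ 2 = r ^ 2 * ∑ i, ‖L 𝐞[i]‖ ^ 2 := by
  simp only [← sum_smul_clm_apply_single L (circlePt _ _), Fin.sum_univ_two, circlePt_apply_zero,
    circlePt_apply_one, cos_add_pi_div_two, sin_add_pi_div_two, norm_add_sq_real, norm_smul,
    mul_pow, norm_eq_abs, sq_abs, real_inner_smul_left, real_inner_smul_right]
  linear_combination r ^ 2 * (‖L 𝐞[0]‖ ^ 2 + ‖L 𝐞[1]‖ ^ 2) * sin_sq_add_cos_sq θ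

theorem integral_comp_circlePt {E : Type*} [NormedAddCommGroup E] [NormedSpace ℝ E] (h : ℝ² → E) :
    ∫ p in polarCoord.target, p.1 • h (circlePt p.1 p.2) = ∫ x, h x := by
  have repr_polarCoord_symm (p : ℝ × ℝ) :
      Complex.orthonormalBasisOneI.repr (Complex.polarCoord.symm p) = circlePt p.1 p.2 := by
    ext i
    fin_cases i <;> simp [Complex.orthonormalBasisOneI_repr_apply,
      -Complex.ofReal_cos, -Complex.ofReal_sin]
  rw [← Complex.orthonormalBasisOneI.measurePreserving_repr.integral_comp
    Complex.orthonormalBasisOneI.repr.toHomeomorph.measurableEmbedding,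
    ← Complex.integral_comp_polarCoord_symm]
  simp only [repr_polarCoord_symm]

section PolarIntegral

variable {E : Type*} [NormedAddCommGroup E] [NormedSpace ℝ E] {ρ : ℝ}

theorem circlePt_mem_closedBall (hρ : 0 ≤ ρ) (θ : ℝ) : circlePt ρ θ ∈ closedBall 0 ρ := by
  simp [norm_circlePt, abs_of_nonneg hρ]

theorem continuous_comp_circlePt {X : Type*} [TopologicalSpace X] (hρ : 0 ≤ ρ) {h : ℝ² → X}
    (hh : ∀ x ∈ closedBall 0 ρ, ContinuousAt h x) : Continuous fun θ ↦ h (circlePt ρ θ) :=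
  continuous_iff_continuousAt.2 fun θ ↦ (hh _ (circlePt_mem_closedBall hρ θ)).comp
    (continuous_circlePt_right ρ).continuousAt

theorem deriv_comp_circlePt {u : ℝ² → E} {θ : ℝ}
    (hu : DifferentiableAt ℝ u (circlePt ρ θ)) :
    deriv (fun t ↦ u (circlePt ρ t)) θ =
      fderiv ℝ u (circlePt ρ θ) (circlePt ρ (θ + π / 2)) :=
  (hu.hasFDerivAt.comp_hasDerivAt θ (hasDerivAt_circlePt ρ θ)).deriv

theorem continuous_fderiv_circlePt_apply (hρ : 0 ≤ ρ) {u : ℝ² → E}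
    (hu : ∀ x ∈ closedBall 0 ρ, ContDiffAt ℝ 1 u x) {w : ℝ → ℝ²} (hw : Continuous w) :
    Continuous fun θ ↦ fderiv ℝ u (circlePt ρ θ) (w θ) :=
  (continuous_comp_circlePt hρ fun x hx ↦ (hu x hx).continuousAt_fderiv one_ne_zero).clm_apply hw

theorem mapsTo_circlePt_closedBall (ρ : ℝ) (s : Set ℝ) :
    MapsTo (fun p : ℝ × ℝ ↦ circlePt p.1 p.2) (Icc 0 ρ ×ˢ s) (closedBall 0 ρ) := by
  rintro p ⟨hp, -⟩
  simpa [norm_circlePt, abs_of_nonneg hp.1] using hp.2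

theorem mapsTo_circlePt_ball (ρ : ℝ) (s : Set ℝ) :
    MapsTo (fun p : ℝ × ℝ ↦ circlePt p.1 p.2) (Ioo 0 ρ ×ˢ s) (ball 0 ρ) := by
  rintro p ⟨hp, -⟩
  simpa [norm_circlePt, abs_of_pos hp.1] using hp.2

theorem setIntegral_ball_eq_setIntegral_circlePt (h : ℝ² → E) :
    ∫ x in ball 0 ρ, h x =
      ∫ p in Ioo 0 ρ ×ˢ Ioo (-π) π, p.1 • h (circlePt p.1 p.2) := by
  have preimage_ball : polarCoord.target ∩ (fun p : ℝ × ℝ ↦ circlePt p.1 p.2) ⁻¹' ball 0 ρ =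
      Ioo 0 ρ ×ˢ Ioo (-π) π := by
    ext p
    simp only [polarCoord_target, mem_inter_iff, mem_prod, mem_Ioi, mem_preimage,
      mem_ball_zero_iff, norm_circlePt, mem_Ioo]
    grind
  rw [← integral_indicator measurableSet_ball, ← integral_comp_circlePt, ← preimage_ball,
    ← setIntegral_indicator (continuous_circlePt.measurable measurableSet_ball)]
  refine integral_congr_ae (.of_forall fun p ↦ ?_)
  by_cases hp : circlePt p.1 p.2 ∈ ball 0 ρ <;> simp [indicator, hp]

theorem integrableOn_smul_comp_circlePt {h : ℝ² → E} (hh : ContinuousOn h (closedBall 0 ρ)) :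
    IntegrableOn (fun p : ℝ × ℝ ↦ p.1 • h (circlePt p.1 p.2)) (Ioo 0 ρ ×ˢ Ioo (-π) π) :=
  ((continuousOn_fst.smul (hh.comp continuous_circlePt.continuousOn
    (mapsTo_circlePt_closedBall ρ _))).integrableOn_compact
      (isCompact_Icc.prod isCompact_Icc)).mono_set
      (prod_mono Ioo_subset_Icc_self Ioo_subset_Icc_self)

/-- `r` times the outward normal component of the vector field `V` at the point with polar
coordinates `p = (r, θ)`. -/
noncomputable def radialFlux (V : Fin 2 → ℝ² → E) (p : ℝ × ℝ) : E :=
  ∑ i, circlePt p.1 p.2 i • V i (circlePt p.1 p.2)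

/-- The component of the vector field `V` along the counterclockwise unit tangent at the point with
polar coordinates `p = (r, θ)`. -/
noncomputable def angularFlux (V : Fin 2 → ℝ² → E) (p : ℝ × ℝ) : E :=
  ∑ i, circlePt 1 (p.2 + π / 2) i • V i (circlePt p.1 p.2)

theorem polar_divergence_eq_smul_divergence (L : Fin 2 → ℝ² →L[ℝ] E) (y : Fin 2 → E) (r θ : ℝ) :
    (∑ i, (circlePt r θ i • L i (circlePt 1 θ) + circlePt 1 θ i • y i)) +
      ∑ i, (circlePt 1 (θ + π / 2) i • L i (circlePt r (θ + π / 2)) +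
        circlePt 1 (θ + π / 2 + π / 2) i • y i) = r • ∑ i, L i 𝐞[i] := by
  rw [← Finset.sum_add_distrib, Finset.smul_sum]
  refine Finset.sum_congr rfl fun i _ ↦ ?_
  rw [← circlePt_frame_expansion_single θ i, add_assoc θ, add_halves, circlePt_add_pi,
    ← smul_circlePt_one r θ, ← smul_circlePt_one r (θ + π / 2)]
  simp only [PiLp.smul_apply, PiLp.neg_apply, map_add, map_smul, smul_add, smul_eq_mul]
  module

theorem hasFDerivAt_sum_smul_comp {G H ι : Type*} [NormedAddCommGroup G] [NormedSpace ℝ G]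
    [NormedAddCommGroup H] [NormedSpace ℝ H] [Fintype ι]
    {c : G → EuclideanSpace ℝ ι} {c' : G →L[ℝ] EuclideanSpace ℝ ι} {φ : G → H} {φ' : G →L[ℝ] H}
    {V : ι → H → E} {p : G} (hc : HasFDerivAt c c' p) (hφ : HasFDerivAt φ φ' p)
    (hV : ∀ i, DifferentiableAt ℝ (V i) (φ p)) :
    HasFDerivAt (fun p ↦ ∑ i, c p i • V i (φ p))
      (∑ i, (c p i • (fderiv ℝ (V i) (φ p)).comp φ' +
        ((EuclideanSpace.proj i).comp c').smulRight (V i (φ p)))) p :=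
  .fun_sum fun i _ ↦
    ((EuclideanSpace.proj (𝕜 := ℝ) i).hasFDerivAt.comp p hc).smul ((hV i).hasFDerivAt.comp p hφ)

theorem differentiableAt_radialFlux {V : Fin 2 → ℝ² → E} {p : ℝ × ℝ}
    (hV : ∀ i, DifferentiableAt ℝ (V i) (circlePt p.1 p.2)) :
    DifferentiableAt ℝ (radialFlux V) p :=
  (hasFDerivAt_sum_smul_comp (hasStrictFDerivAt_circlePt p).hasFDerivAt
    (hasStrictFDerivAt_circlePt p).hasFDerivAt hV).differentiableAt

theorem differentiableAt_angularFlux {V : Fin 2 → ℝ² → E} {p : ℝ × ℝ}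
    (hV : ∀ i, DifferentiableAt ℝ (V i) (circlePt p.1 p.2)) :
    DifferentiableAt ℝ (angularFlux V) p :=
  (hasFDerivAt_sum_smul_comp (hasFDerivAt_circlePt_snd_add 1 (π / 2) p)
    (hasStrictFDerivAt_circlePt p).hasFDerivAt hV).differentiableAt

theorem fderiv_radialFlux_add_fderiv_angularFlux {V : Fin 2 → ℝ² → E} {p : ℝ × ℝ}
    (hV : ∀ i, DifferentiableAt ℝ (V i) (circlePt p.1 p.2)) :
    fderiv ℝ (radialFlux V) p (1, 0) + fderiv ℝ (angularFlux V) p (0, 1) =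
      p.1 • ∑ i, fderiv ℝ (V i) (circlePt p.1 p.2) 𝐞[i] := by
  have hcircle := (hasStrictFDerivAt_circlePt p).hasFDerivAt
  have fderiv_radial : fderiv ℝ (radialFlux V) p = _ :=
    (hasFDerivAt_sum_smul_comp hcircle hcircle hV).fderiv
  have fderiv_angular : fderiv ℝ (angularFlux V) p = _ :=
    (hasFDerivAt_sum_smul_comp (hasFDerivAt_circlePt_snd_add 1 (π / 2) p) hcircle hV).fderiv
  rw [fderiv_radial, fderiv_angular,
    ← polar_divergence_eq_smul_divergence _ (fun i ↦ V i (circlePt p.1 p.2)) p.1 p.2]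
  simp

theorem continuousOn_radialFlux {V : Fin 2 → ℝ² → E}
    (hV : ∀ i, ContinuousOn (V i) (closedBall 0 ρ)) (s : Set ℝ) :
    ContinuousOn (radialFlux V) (Icc 0 ρ ×ˢ s) :=
  continuousOn_finsetSum _ fun i _ ↦
    ((EuclideanSpace.proj i).continuous.comp continuous_circlePt).continuousOn.smul
      ((hV i).comp continuous_circlePt.continuousOn (mapsTo_circlePt_closedBall ρ s))

theorem continuousOn_angularFlux {V : Fin 2 → ℝ² → E}
    (hV : ∀ i, ContinuousOn (V i) (closedBall 0 ρ)) (s : Set ℝ) :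
    ContinuousOn (angularFlux V) (Icc 0 ρ ×ˢ s) :=
  continuousOn_finsetSum _ fun i _ ↦
    ((EuclideanSpace.proj i).continuous.comp ((continuous_circlePt_right 1).comp
      (continuous_snd.add continuous_const))).continuousOn.smul
      ((hV i).comp continuous_circlePt.continuousOn (mapsTo_circlePt_closedBall ρ s))

theorem radialFlux_periodic (V : Fin 2 → ℝ² → E) (r : ℝ) :
    Function.Periodic (fun θ ↦ radialFlux V (r, θ)) (2 * π) := fun θ ↦ by
  simp only [radialFlux, circlePt_periodic r θ]

theorem angularFlux_periodic (V : Fin 2 → ℝ² → E) (r : ℝ) :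
    Function.Periodic (fun θ ↦ angularFlux V (r, θ)) (2 * π) := fun θ ↦ by
  simp only [angularFlux, circlePt_periodic r θ, add_right_comm θ (2 * π),
    circlePt_periodic 1 (θ + π / 2)]

theorem radialFlux_zero_left (V : Fin 2 → ℝ² → E) (θ : ℝ) : radialFlux V (0, θ) = 0 := by
  simp [radialFlux, Fin.sum_univ_two]

theorem integral_fderiv_radialFlux_add_fderiv_angularFlux (hρ : 0 ≤ ρ) {V : Fin 2 → ℝ² → E}
    (hVc : ∀ i, ContinuousOn (V i) (closedBall 0 ρ))
    (hVd : ∀ i, ∀ x ∈ ball 0 ρ, DifferentiableAt ℝ (V i) x)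
    (hint : IntegrableOn
      (fun p ↦ fderiv ℝ (radialFlux V) p (1, 0) + fderiv ℝ (angularFlux V) p (0, 1))
      (Icc (0, -π) (ρ, π))) :
    ∫ p in Icc (0, -π) (ρ, π),
        (fderiv ℝ (radialFlux V) p (1, 0) + fderiv ℝ (angularFlux V) p (0, 1)) =
      ∫ θ in 0..2 * π, radialFlux V (ρ, θ) := by
  have differentiableAt (p : ℝ × ℝ) (hp : p ∈ Ioo 0 ρ ×ˢ Ioo (-π) π) (i : Fin 2) :
      DifferentiableAt ℝ (V i) (circlePt p.1 p.2) :=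
    hVd i _ (mapsTo_circlePt_ball ρ _ hp)
  have angularFlux_neg_pi (r : ℝ) : angularFlux V (r, -π) = angularFlux V (r, π) := by
    convert (angularFlux_periodic V r (-π)).symm using 3
    ring
  have shift_interval := (radialFlux_periodic V ρ).intervalIntegral_add_eq (-π) 0
  rw [zero_add, show -π + 2 * π = π by ring] at shift_interval
  rw [integral_divergence_prod_Icc_of_hasFDerivAt_of_le (radialFlux V) (angularFlux V) _ _
    (0, -π) (ρ, π) ⟨hρ, neg_le_self pi_pos.le⟩
    (Icc_prod_Icc 0 ρ (-π) π ▸ continuousOn_radialFlux hVc _)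
    (Icc_prod_Icc 0 ρ (-π) π ▸ continuousOn_angularFlux hVc _)
    (fun p hp ↦ (differentiableAt_radialFlux (differentiableAt p hp)).hasFDerivAt)
    (fun p hp ↦ (differentiableAt_angularFlux (differentiableAt p hp)).hasFDerivAt) hint]
  simpa only [angularFlux_neg_pi, radialFlux_zero_left, intervalIntegral.integral_zero, sub_self,
    zero_add, sub_zero] using shift_interval

theorem integral_divergence_ball (hρ : 0 ≤ ρ) {V : Fin 2 → ℝ² → E}
    (hVc : ∀ i, ContinuousOn (V i) (closedBall 0 ρ))
    (hVd : ∀ i, ∀ x ∈ ball 0 ρ, DifferentiableAt ℝ (V i) x)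
    (hdiv : ContinuousOn (fun x ↦ ∑ i, fderiv ℝ (V i) x 𝐞[i]) (closedBall 0 ρ)) :
    ∫ x in ball 0 ρ, ∑ i, fderiv ℝ (V i) x 𝐞[i] =
      ∫ θ in 0..2 * π, ∑ i, circlePt ρ θ i • V i (circlePt ρ θ) := by
  have measurableSet_rectangle : MeasurableSet (Ioo 0 ρ ×ˢ Ioo (-π) π) :=
    measurableSet_Ioo.prod measurableSet_Ioo
  have rectangle_ae_eq : Ioo 0 ρ ×ˢ Ioo (-π) π =ᵐ[volume] Icc (0, -π) (ρ, π) := by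
    rw [← Icc_prod_Icc]
    exact Measure.set_prod_ae_eq Ioo_ae_eq_Icc Ioo_ae_eq_Icc
  have eqOn_divergence : EqOn
      (fun p : ℝ × ℝ ↦ p.1 • ∑ i, fderiv ℝ (V i) (circlePt p.1 p.2) 𝐞[i])
      (fun p ↦ fderiv ℝ (radialFlux V) p (1, 0) + fderiv ℝ (angularFlux V) p (0, 1))
      (Ioo 0 ρ ×ˢ Ioo (-π) π) := fun p hp ↦
    (fderiv_radialFlux_add_fderiv_angularFlux fun i ↦
      hVd i _ (mapsTo_circlePt_ball ρ _ hp)).symm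
  have integrableOn_divergence : IntegrableOn
      (fun p ↦ fderiv ℝ (radialFlux V) p (1, 0) + fderiv ℝ (angularFlux V) p (0, 1))
      (Icc (0, -π) (ρ, π)) := by
    rw [← integrableOn_congr_set_ae rectangle_ae_eq,
      ← integrableOn_congr_fun eqOn_divergence measurableSet_rectangle]
    exact integrableOn_smul_comp_circlePt hdiv
  rw [setIntegral_ball_eq_setIntegral_circlePt,
    setIntegral_congr_fun measurableSet_rectangle eqOn_divergence,
    setIntegral_congr_set rectangle_ae_eq]
  exact integral_fderiv_radialFlux_add_fderiv_angularFlux hρ hVc hVd integrableOn_divergence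

theorem integral_divergence_ball_of_contDiffAt (hρ : 0 ≤ ρ) {V : Fin 2 → ℝ² → E}
    (hV : ∀ i, ∀ x ∈ closedBall 0 ρ, ContDiffAt ℝ 1 (V i) x) :
    ∫ x in ball 0 ρ, ∑ i, fderiv ℝ (V i) x 𝐞[i] =
      ∫ θ in 0..2 * π, ∑ i, circlePt ρ θ i • V i (circlePt ρ θ) := by
  refine integral_divergence_ball hρ (fun i x hx ↦ (hV i x hx).continuousAt.continuousWithinAt)
    (fun i x hx ↦ (hV i x (ball_subset_closedBall hx)).differentiableAt one_ne_zero)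
    (continuousOn_finsetSum _ fun i _ x hx ↦ ?_)
  exact (((hV i x hx).continuousAt_fderiv one_ne_zero).clm_apply
    continuousAt_const).continuousWithinAt

end PolarIntegral

section Identities

variable {F : Type*} [NormedAddCommGroup F] [InnerProductSpace ℝ F]

theorem integral_ball_inner_fderiv_add_inner_laplacian {ρ : ℝ} (hρ : 0 ≤ ρ) {u v : ℝ² → F}
    (hu : ∀ x ∈ closedBall 0 ρ, ContDiffAt ℝ 2 u x)
    (hv : ∀ x ∈ closedBall 0 ρ, ContDiffAt ℝ 1 v x) :
    ∫ x in ball 0 ρ, ((∑ i, ⟪fderiv ℝ v x 𝐞[i], fderiv ℝ u x 𝐞[i]⟫_ℝ) + ⟪v x, Δ u x⟫_ℝ) =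
      ∫ θ in 0..2 * π, ⟪v (circlePt ρ θ), fderiv ℝ u (circlePt ρ θ) (circlePt ρ θ)⟫_ℝ := by
  have divergence_eq (x : ℝ²) (hx : x ∈ ball 0 ρ) :
      (∑ i, ⟪fderiv ℝ v x 𝐞[i], fderiv ℝ u x 𝐞[i]⟫_ℝ) + ⟪v x, Δ u x⟫_ℝ =
        ∑ i, fderiv ℝ (fun y ↦ ⟪v y, fderiv ℝ u y 𝐞[i]⟫_ℝ) x 𝐞[i] := by
    have hux := hu x (ball_subset_closedBall hx)
    have hvx := (hv x (ball_subset_closedBall hx)).differentiableAt one_ne_zero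
    rw [laplacian_eq_sum_fderiv_fderiv, inner_sum, ← Finset.sum_add_distrib]
    refine Finset.sum_congr rfl fun i _ ↦ ?_
    rw [fderiv_inner_apply ℝ hvx
      ((contDiffAt_fderiv_apply_const hux _).differentiableAt one_ne_zero),
      fderiv_fderiv_apply_const hux, add_comm]
  rw [setIntegral_congr_fun measurableSet_ball divergence_eq,
    integral_divergence_ball_of_contDiffAt hρ fun i x hx ↦
      (hv x hx).inner ℝ (contDiffAt_fderiv_apply_const (hu x hx) _)]
  simp only [smul_eq_mul, ← real_inner_smul_right, ← inner_sum, sum_smul_clm_apply_single]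

/-- The `i`-th component `2 ⟪x · ∇u, ∂ᵢu⟫ - xᵢ |∇u|²` of the Pohozaev field of `u`, obtained by
pairing the stress-energy tensor of `u` with the dilation field `x`. Its flux through a sphere
compares the radial and tangential derivatives of `u` there. -/
noncomputable def pohozaevField {ι : Type*} [Fintype ι] [DecidableEq ι]
    (u : EuclideanSpace ℝ ι → F) (i : ι) (x : EuclideanSpace ℝ ι) : ℝ :=
  2 * ⟪fderiv ℝ u x x, fderiv ℝ u x 𝐞[i]⟫_ℝ - x i * ∑ j, ‖fderiv ℝ u x 𝐞[j]‖ ^ 2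

section Pohozaev

variable {ι : Type*} [Fintype ι] [DecidableEq ι] {u : EuclideanSpace ℝ ι → F}
  {x : EuclideanSpace ℝ ι}

theorem contDiffAt_pohozaevField (hu : ContDiffAt ℝ 2 u x) (i : ι) :
    ContDiffAt ℝ 1 (pohozaevField u i) x := by
  have radial_derivative : ContDiffAt ℝ 1 (fun y ↦ fderiv ℝ u y y) x :=
    (contDiffAt_fderiv hu).clm_apply contDiffAt_id
  have coordinate : ContDiffAt ℝ 1 (fun y : EuclideanSpace ℝ ι ↦ y i) x :=
    (EuclideanSpace.proj (𝕜 := ℝ) i).contDiff.contDiffAt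
  exact (contDiffAt_const.mul
    (radial_derivative.inner ℝ (contDiffAt_fderiv_apply_const hu _))).sub
      (coordinate.mul (.sum fun j _ ↦ (contDiffAt_fderiv_apply_const hu _).norm_sq ℝ))

theorem fderiv_pohozaevField_apply (hu : ContDiffAt ℝ 2 u x) (i : ι)
    (w : EuclideanSpace ℝ ι) :
    fderiv ℝ (pohozaevField u i) x w =
      2 * (⟪fderiv ℝ u x x, fderiv ℝ (fderiv ℝ u) x w 𝐞[i]⟫_ℝ +
        ⟪fderiv ℝ u x w + fderiv ℝ (fderiv ℝ u) x w x, fderiv ℝ u x 𝐞[i]⟫_ℝ) -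
      (x i * ∑ j, 2 * ⟪fderiv ℝ u x 𝐞[j], fderiv ℝ (fderiv ℝ u) x w 𝐞[j]⟫_ℝ +
        (∑ j, ‖fderiv ℝ u x 𝐞[j]‖ ^ 2) * w i) := by
  have hD := (differentiableAt_fderiv hu).hasFDerivAt
  have hpartial (j : ι) := hD.clm_apply (hasFDerivAt_const 𝐞[j] x)
  have hfield := (((hD.clm_apply (hasFDerivAt_id x)).inner ℝ (hpartial i)).const_mul 2).sub
    (((EuclideanSpace.proj (𝕜 := ℝ) i).hasFDerivAt (x := x)).mul
      (.fun_sum (u := Finset.univ) fun j _ ↦ (hpartial j).norm_sq))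
  refine (congrArg (· w) hfield.fderiv).trans ?_
  simp

theorem sum_fderiv_pohozaevField (hu : ContDiffAt ℝ 2 u x) :
    ∑ i, fderiv ℝ (pohozaevField u i) x 𝐞[i] =
      2 * ⟪fderiv ℝ u x x, Δ u x⟫_ℝ +
        (2 - Fintype.card ι) * ∑ i, ‖fderiv ℝ u x 𝐞[i]‖ ^ 2 := by
  have symm (i : ι) : fderiv ℝ (fderiv ℝ u) x 𝐞[i] x = fderiv ℝ (fderiv ℝ u) x x 𝐞[i] :=
    hu.isSymmSndFDerivAt (by simp) _ _
  have gradient_term : ∑ i, x i * ∑ j, ⟪fderiv ℝ u x 𝐞[j], fderiv ℝ (fderiv ℝ u) x 𝐞[i] 𝐞[j]⟫_ℝ =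
      ∑ j, ⟪fderiv ℝ (fderiv ℝ u) x 𝐞[j] x, fderiv ℝ u x 𝐞[j]⟫_ℝ := by
    simp_rw [Finset.mul_sum, symm]
    rw [Finset.sum_comm]
    refine Finset.sum_congr rfl fun j _ ↦ ?_
    rw [real_inner_comm, ← sum_smul_clm_apply_single (fderiv ℝ (fderiv ℝ u) x) x]
    simp [inner_sum, real_inner_smul_right]
  simp only [fderiv_pohozaevField_apply hu, inner_add_left, real_inner_self_eq_norm_sq,
    laplacian_eq_sum_fderiv_fderiv, inner_sum, Finset.sum_sub_distrib, Finset.sum_add_distrib,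
    ← Finset.mul_sum, PiLp.single_apply, Finset.sum_const, Finset.card_univ,
    mul_left_comm _ (2 : ℝ), gradient_term, ↓reduceIte, nsmul_eq_mul, mul_one]
  ring

theorem sum_mul_pohozaevField (u : EuclideanSpace ℝ ι → F) (x : EuclideanSpace ℝ ι) :
    ∑ i, x i * pohozaevField u i x =
      2 * ‖fderiv ℝ u x x‖ ^ 2 - ‖x‖ ^ 2 * ∑ i, ‖fderiv ℝ u x 𝐞[i]‖ ^ 2 := by
  have radial_term : ∑ i, x i * ⟪fderiv ℝ u x x, fderiv ℝ u x 𝐞[i]⟫_ℝ = ‖fderiv ℝ u x x‖ ^ 2 := by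
    simp only [← real_inner_smul_right, ← inner_sum, sum_smul_clm_apply_single,
      real_inner_self_eq_norm_sq]
  simp only [pohozaevField, mul_sub, mul_left_comm _ (2 : ℝ), ← mul_assoc (x _) (x _), ← sq,
    Finset.sum_sub_distrib, ← Finset.mul_sum, ← Finset.sum_mul, radial_term,
    EuclideanSpace.real_norm_sq_eq]

theorem integral_ball_inner_fderiv_self_laplacian {ρ : ℝ} (hρ : 0 ≤ ρ) {u : ℝ² → F}
    (hu : ∀ x ∈ closedBall 0 ρ, ContDiffAt ℝ 2 u x) :
    ∫ x in ball 0 ρ, 2 * ⟪fderiv ℝ u x x, Δ u x⟫_ℝ =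
      ∫ θ in 0..2 * π, (‖fderiv ℝ u (circlePt ρ θ) (circlePt ρ θ)‖ ^ 2 -
        ‖fderiv ℝ u (circlePt ρ θ) (circlePt ρ (θ + π / 2))‖ ^ 2) := by
  have divergence_eq (x : ℝ²) (hx : x ∈ ball 0 ρ) :
      2 * ⟪fderiv ℝ u x x, Δ u x⟫_ℝ = ∑ i, fderiv ℝ (pohozaevField u i) x 𝐞[i] := by
    simp [sum_fderiv_pohozaevField (hu x (ball_subset_closedBall hx))]
  rw [setIntegral_congr_fun measurableSet_ball divergence_eq,
    integral_divergence_ball_of_contDiffAt hρ fun i x hx ↦ contDiffAt_pohozaevField (hu x hx) i]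
  refine intervalIntegral.integral_congr fun θ _ ↦ ?_
  simp only [smul_eq_mul, sum_mul_pohozaevField, norm_circlePt, sq_abs]
  linear_combination norm_sq_clm_circlePt_add (fderiv ℝ u (circlePt ρ θ)) ρ θ

end Pohozaev

end Identities

section Harmonic

open InnerProductSpace

variable {F : Type*} [NormedAddCommGroup F] [InnerProductSpace ℝ F] {ρ : ℝ} {u : ℝ² → F}

theorem integral_ball_norm_sq_fderiv_of_harmonicOnNhd (hρ : 0 ≤ ρ)
    (hu : HarmonicOnNhd u (closedBall 0 ρ)) (q : F) :
    ∫ x in ball 0 ρ, ∑ i, ‖fderiv ℝ u x 𝐞[i]‖ ^ 2 =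
      ∫ θ in 0..2 * π,
        ⟪u (circlePt ρ θ) - q, fderiv ℝ u (circlePt ρ θ) (circlePt ρ θ)⟫_ℝ := by
  rw [← integral_ball_inner_fderiv_add_inner_laplacian hρ (v := fun x ↦ u x - q)
    (fun x hx ↦ (hu x hx).1) fun x hx ↦ ((hu x hx).1.of_le one_le_two).sub contDiffAt_const]
  refine setIntegral_congr_fun measurableSet_ball fun x hx ↦ ?_
  simp only [fderiv_sub_const, real_inner_self_eq_norm_sq,
    (hu x (ball_subset_closedBall hx)).2.self_of_nhds, Pi.zero_apply, inner_zero_right, add_zero]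

theorem integral_norm_sq_angular_eq_radial_of_harmonicOnNhd (hρ : 0 ≤ ρ)
    (hu : HarmonicOnNhd u (closedBall 0 ρ)) :
    ∫ θ in 0..2 * π, ‖fderiv ℝ u (circlePt ρ θ) (circlePt ρ (θ + π / 2))‖ ^ 2 =
      ∫ θ in 0..2 * π, ‖fderiv ℝ u (circlePt ρ θ) (circlePt ρ θ)‖ ^ 2 := by
  have integrable {w : ℝ → ℝ²} (hw : Continuous w) : IntervalIntegrable
      (fun θ ↦ ‖fderiv ℝ u (circlePt ρ θ) (w θ)‖ ^ 2) volume 0 (2 * π) :=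
    ((continuous_fderiv_circlePt_apply hρ (fun x hx ↦ (hu x hx).1.of_le one_le_two)
      hw).norm.pow 2).intervalIntegrable _ _
  have laplacian_term : ∫ x in ball 0 ρ, 2 * ⟪fderiv ℝ u x x, Δ u x⟫_ℝ = 0 :=
    setIntegral_eq_zero_of_forall_eq_zero fun x hx ↦ by
      simp [(hu x (ball_subset_closedBall hx)).2.self_of_nhds]
  have continuous_tangent : Continuous fun θ ↦ circlePt ρ (θ + π / 2) :=
    (continuous_circlePt_right ρ).comp (continuous_add_const (π / 2))
  rw [integral_ball_inner_fderiv_self_laplacian hρ fun x hx ↦ (hu x hx).1,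
    intervalIntegral.integral_sub (integrable (continuous_circlePt_right ρ))
      (integrable continuous_tangent)] at laplacian_term
  exact (sub_eq_zero.1 laplacian_term).symm

theorem harmonicOnNhd_of_sum_fderiv_fderiv_eq_zero {ι : Type*} [Fintype ι] [DecidableEq ι]
    {u : EuclideanSpace ℝ ι → F} {U : Set (EuclideanSpace ℝ ι)} (hU : IsOpen U)
    (hu : ContDiffOn ℝ 2 u U)
    (hΔ : ∀ x ∈ U, ∑ i, fderiv ℝ (fun y ↦ fderiv ℝ u y 𝐞[i]) x 𝐞[i] = 0) :
    HarmonicOnNhd u U := by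
  intro x hx
  refine ⟨hu.contDiffAt (hU.mem_nhds hx), ?_⟩
  filter_upwards [hU.mem_nhds hx] with y hy
  have huy := hu.contDiffAt (hU.mem_nhds hy)
  simpa [laplacian_eq_sum_fderiv_fderiv, fderiv_fderiv_apply_const huy] using hΔ y hy

theorem stmt_8_general (hρ : 0 < ρ) (q : F) (hu : HarmonicOnNhd u (closedBall 0 ρ)) :
    (∫ x in ball 0 ρ, ∑ i, ‖fderiv ℝ u x 𝐞[i]‖ ^ 2) ^ 2 ≤
      ((1 / ρ) * ∫ θ in 0..2 * π, ‖deriv (fun t ↦ u (circlePt ρ t)) θ‖ ^ 2) *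
        (ρ * ∫ θ in 0..2 * π, ‖u (circlePt ρ θ) - q‖ ^ 2) := by
  have hu₁ (x : ℝ²) (hx : x ∈ closedBall 0 ρ) : ContDiffAt ℝ 1 u x :=
    (hu x hx).1.of_le one_le_two
  have boundary_value : Continuous fun θ ↦ u (circlePt ρ θ) - q :=
    (continuous_comp_circlePt hρ.le fun x hx ↦ (hu₁ x hx).continuousAt).sub continuous_const
  have radial_derivative : Continuous fun θ ↦ fderiv ℝ u (circlePt ρ θ) (circlePt ρ θ) :=
    continuous_fderiv_circlePt_apply hρ.le hu₁ (continuous_circlePt_right ρ)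
  have deriv_eq (θ : ℝ) := deriv_comp_circlePt
    ((hu₁ _ (circlePt_mem_closedBall hρ.le θ)).differentiableAt one_ne_zero)
  calc (∫ x in ball 0 ρ, ∑ i, ‖fderiv ℝ u x 𝐞[i]‖ ^ 2) ^ 2
    _ = (∫ θ in 0..2 * π,
          ⟪u (circlePt ρ θ) - q, fderiv ℝ u (circlePt ρ θ) (circlePt ρ θ)⟫_ℝ) ^ 2 := by
      rw [integral_ball_norm_sq_fderiv_of_harmonicOnNhd hρ.le hu q]
    _ ≤ (∫ θ in 0..2 * π, ‖u (circlePt ρ θ) - q‖ ^ 2) *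
          ∫ θ in 0..2 * π, ‖fderiv ℝ u (circlePt ρ θ) (circlePt ρ θ)‖ ^ 2 := by
      simp only [intervalIntegral.integral_of_le two_pi_pos.le]
      exact sq_integral_inner_le (memLp_restrict_Ioc_of_continuous boundary_value _ _ _)
        (memLp_restrict_Ioc_of_continuous radial_derivative _ _ _)
    _ = _ := by
      rw [← integral_norm_sq_angular_eq_radial_of_harmonicOnNhd hρ.le hu]
      simp only [deriv_eq]
      field_simp

end Harmonic

end

theorem stmt_8 (m : ℕ) (hm : 1 ≤ m) (ρ : ℝ) (hρ : 0 < ρ) (q : EuclideanSpace ℝ (Fin m))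
    (U : Set (EuclideanSpace ℝ (Fin 2))) (hU : IsOpen U)
    (hUball : Metric.closedBall (0 : EuclideanSpace ℝ (Fin 2)) ρ ⊆ U)
    (u : EuclideanSpace ℝ (Fin 2) → EuclideanSpace ℝ (Fin m))
    (hu : ContDiffOn ℝ 2 u U)
    (hharm : ∀ x ∈ U,
      fderiv ℝ (fun y => fderiv ℝ u y (EuclideanSpace.single 0 1)) x
          (EuclideanSpace.single 0 1) +
        fderiv ℝ (fun y => fderiv ℝ u y (EuclideanSpace.single 1 1)) x
          (EuclideanSpace.single 1 1) = 0) :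
    (∫ x in Metric.ball (0 : EuclideanSpace ℝ (Fin 2)) ρ,
        ∑ i : Fin 2, ‖fderiv ℝ u x (EuclideanSpace.single i 1)‖ ^ 2) ^ 2 ≤
      ((1 / ρ) * ∫ θ in (0 : ℝ)..(2 * Real.pi),
          ‖deriv (fun t => u (circlePt ρ t)) θ‖ ^ 2) *
        (ρ * ∫ θ in (0 : ℝ)..(2 * Real.pi), ‖u (circlePt ρ θ) - q‖ ^ 2) := by
  exact stmt_8_general hρ q ((harmonicOnNhd_of_sum_fderiv_fderiv_eq_zero hU hu
    (by simpa only [Fin.sum_univ_two] using hharm)).mono hUball)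
end

section
/- Let m, N ∈ ℕ with m ≥ 1, let a₀, a₁, …, a_N, b₁, …, b_N ∈ ℝᵐ, and let u be the associated harmonic polynomial. Then for every ρ > 0, ∫_{D_ρ} ‖Du(x)‖²_HS dx = π Σ_{n=1}^{N} n ρ^{2n} ( ‖aₙ‖² + ‖bₙ‖² ). -/
open MeasureTheory

/-!
Identify `ℝ²` with `ℂ` and write `u z = c + ∑ Tₙ (zⁿ)` with `Tₙ : ℂ → F` real-linear,
`Tₙ 1 = aₙ` and `Tₙ I = bₙ`. Then `Du(z) = ∑ Tₙ ∘ (n zⁿ⁻¹ * ·)`. The Hilbert–Schmidt inner product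
of `S ∘ (w * ·)` and `T ∘ (v * ·)` depends on `w, v` only through `w * conj v`, and
real-linearly so. Integrating `‖Du‖²` therefore comes down to integrating the monomials
`zʲ * conj z ^ k` over the disk: by rotation invariance only `j = k` contributes, and that
integral is radial.
-/

open Metric Module Complex ComplexConjugate
open scoped RealInnerProductSpace

section Radial

variable {E : Type*} [NormedAddCommGroup E] [NormedSpace ℝ E] [FiniteDimensional ℝ E]
  [MeasurableSpace E] [BorelSpace E] [Nontrivial E] (μ : Measure E) [μ.IsAddHaarMeasure]

theorem setIntegral_ball_fun_norm {G : Type*} [NormedAddCommGroup G] [NormedSpace ℝ G]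
    (f : ℝ → G) (ρ : ℝ) :
    ∫ x in ball (0 : E) ρ, f ‖x‖ ∂μ =
      finrank ℝ E • μ.real (ball 0 1) • ∫ r in Set.Ioo 0 ρ, r ^ (finrank ℝ E - 1) • f r := by
  have radial : (ball (0 : E) ρ).indicator (fun x ↦ f ‖x‖) =
      fun x ↦ (Set.Iio ρ).indicator f ‖x‖ := by
    ext x
    by_cases hx : ‖x‖ < ρ <;> simp [hx]
  rw [← integral_indicator measurableSet_ball, radial, integral_fun_norm_addHaar μ]
  simp only [← Set.indicator_smul_apply (Set.Iio ρ) (· ^ (finrank ℝ E - 1))]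
  rw [setIntegral_indicator measurableSet_Iio, Set.Ioi_inter_Iio]

theorem setIntegral_ball_norm_pow (k : ℕ) {ρ : ℝ} (hρ : 0 ≤ ρ) :
    ∫ x in ball (0 : E) ρ, ‖x‖ ^ k ∂μ =
      finrank ℝ E * μ.real (ball 0 1) * (ρ ^ (finrank ℝ E + k) / (finrank ℝ E + k)) := by
  have dim_pos : 1 ≤ finrank ℝ E := finrank_pos
  have exponent : finrank ℝ E - 1 + k + 1 = finrank ℝ E + k := by lia
  have radial_integral : ∫ r in Set.Ioo 0 ρ, r ^ (finrank ℝ E - 1) • r ^ k =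
      ρ ^ (finrank ℝ E + k) / (finrank ℝ E + k) := by
    simp only [smul_eq_mul, ← pow_add]
    rw [← integral_Ioc_eq_integral_Ioo, ← intervalIntegral.integral_of_le hρ, integral_pow,
      ← Nat.cast_succ, Nat.succ_eq_add_one, exponent, zero_pow (by lia), sub_zero, Nat.cast_add]
  rw [setIntegral_ball_fun_norm μ (· ^ k), radial_integral, nsmul_eq_mul, smul_eq_mul, mul_assoc]

end Radial

section Isometries

variable {E E' G : Type*} [NormedAddCommGroup G] [NormedSpace ℝ G]
  [NormedAddCommGroup E] [InnerProductSpace ℝ E] [FiniteDimensional ℝ E]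
  [MeasurableSpace E] [BorelSpace E]
  [NormedAddCommGroup E'] [InnerProductSpace ℝ E'] [FiniteDimensional ℝ E']
  [MeasurableSpace E'] [BorelSpace E']

theorem setIntegral_ball_comp_linearIsometryEquiv (e : E ≃ₗᵢ[ℝ] E') (f : E' → G) (ρ : ℝ) :
    ∫ x in ball 0 ρ, f (e x) = ∫ y in ball 0 ρ, f y := by
  rw [← e.measurePreserving.setIntegral_preimage_emb e.toHomeomorph.measurableEmbedding,
    e.preimage_ball, map_zero]

theorem setIntegral_ball_sum_norm_sq_fderiv_comp_repr_symm {ι : Type*} [Fintype ι] [DecidableEq ι]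
    (b : OrthonormalBasis ι ℝ E) (U : E → G) (ρ : ℝ) :
    ∫ x in ball 0 ρ, ∑ i, ‖fderiv ℝ (U ∘ b.repr.symm) x (EuclideanSpace.single i 1)‖ ^ 2 =
      ∫ y in ball 0 ρ, ∑ i, ‖fderiv ℝ U y (b i)‖ ^ 2 := by
  have chain_rule (x : EuclideanSpace ℝ ι) (i : ι) :
      fderiv ℝ (U ∘ b.repr.symm) x (EuclideanSpace.single i 1) =
        fderiv ℝ U (b.repr.symm x) (b i) := by
    rw [← b.repr_symm_single i]
    exact DFunLike.congr_fun b.repr.symm.toContinuousLinearEquiv.comp_right_fderiv _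
  simp only [chain_rule]
  exact setIntegral_ball_comp_linearIsometryEquiv b.repr.symm
    (fun y ↦ ∑ i, ‖fderiv ℝ U y (b i)‖ ^ 2) ρ

end Isometries

-- Rotating by `π / (j - k)` negates the integrand.
theorem setIntegral_ball_pow_mul_conj_pow_of_ne {j k : ℕ} (hjk : j ≠ k) (ρ : ℝ) :
    ∫ z in ball (0 : ℂ) ρ, z ^ j * conj z ^ k = 0 := by
  let ω : Circle := Circle.exp (Real.pi / (j - k))
  have rotation_factor : (ω : ℂ) ^ j * conj (ω : ℂ) ^ k = -1 := by
    have : (j : ℂ) - k ≠ 0 := sub_ne_zero.mpr (Nat.cast_injective.ne hjk)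
    rw [Circle.coe_exp, ← exp_conj, ← exp_nat_mul, ← exp_nat_mul, ← exp_add, ← exp_pi_mul_I]
    congr 1
    simp only [map_mul, conj_ofReal, conj_I]
    push_cast
    field_simp
    ring
  have rotated (z : ℂ) : rotation ω z ^ j * conj (rotation ω z) ^ k = -(z ^ j * conj z ^ k) := by
    rw [rotation_apply, map_mul, mul_pow, mul_pow, mul_mul_mul_comm, rotation_factor, neg_one_mul]
  have integral_eq_neg :=
    setIntegral_ball_comp_linearIsometryEquiv (rotation ω) (fun z ↦ z ^ j * conj z ^ k) ρ
  simp only [rotated, integral_neg] at integral_eq_neg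
  exact self_eq_neg.mp integral_eq_neg.symm

theorem setIntegral_ball_pow_mul_conj_pow_self (j : ℕ) {ρ : ℝ} (hρ : 0 ≤ ρ) :
    ∫ z in ball (0 : ℂ) ρ, z ^ j * conj z ^ j = Real.pi * ρ ^ (2 * (j + 1)) / (j + 1) := by
  have integrand (z : ℂ) : z ^ j * conj z ^ j = ((‖z‖ ^ (2 * j) : ℝ) : ℂ) := by
    rw [← mul_pow, mul_conj', pow_mul, ofReal_pow, ofReal_pow]
  have volume_unit_ball : volume.real (ball (0 : ℂ) 1) = Real.pi := by
    simp [Measure.real, Complex.volume_ball]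
  simp only [integrand]
  rw [integral_complex_ofReal, setIntegral_ball_norm_pow volume _ hρ, finrank_real_complex,
    volume_unit_ball]
  have : (j : ℂ) + 1 ≠ 0 := Nat.cast_add_one_ne_zero j
  have denominator : (2 : ℂ) + 2 * j = 2 * (j + 1) := by ring
  push_cast
  rw [denominator]
  field_simp
  ring

theorem setIntegral_ball_deriv_pow_mul_conj_deriv_pow (n k : ℕ) {ρ : ℝ} (hρ : 0 ≤ ρ) :
    ∫ z in ball (0 : ℂ) ρ, n * z ^ (n - 1) * conj (k * z ^ (k - 1)) =
      if n = k then ((Real.pi * (n * ρ ^ (2 * n)) : ℝ) : ℂ) else 0 := by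
  have integrand (z : ℂ) : n * z ^ (n - 1) * conj (k * z ^ (k - 1)) =
      n * k * (z ^ (n - 1) * conj z ^ (k - 1)) := by
    rw [map_mul, map_natCast, map_pow, mul_mul_mul_comm]
  simp only [integrand, integral_const_mul]
  rcases n with _ | n
  · simp
  rcases k with _ | k
  · simp
  simp only [Nat.add_sub_cancel]
  split_ifs with h
  · obtain rfl : n = k := Nat.succ_injective h
    rw [setIntegral_ball_pow_mul_conj_pow_self n hρ]
    have : (n : ℂ) + 1 ≠ 0 := Nat.cast_add_one_ne_zero n
    push_cast
    field_simp
  · rw [setIntegral_ball_pow_mul_conj_pow_of_ne (by lia), mul_zero]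

theorem fderiv_const_add_sum_pow {G : Type*} [NormedAddCommGroup G] [NormedSpace ℝ G]
    (c : G) (s : Finset ℕ) (T : ℕ → ℂ →L[ℝ] G) (z v : ℂ) :
    fderiv ℝ (fun z ↦ c + ∑ n ∈ s, T n (z ^ n)) z v =
      ∑ n ∈ s, T n (n * z ^ (n - 1) * v) := by
  have term_deriv (n : ℕ) := (T n).hasFDerivAt.comp z
    ((hasDerivAt_pow n z).hasFDerivAt.restrictScalars ℝ)
  have sum_deriv := (HasFDerivAt.fun_sum fun n (_ : n ∈ s) ↦ term_deriv n).const_add c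
  refine (DFunLike.congr_fun sum_deriv.fderiv v).trans ?_
  simp [mul_comm]

section HarmonicPolynomials

variable {F : Type*} [NormedAddCommGroup F] [InnerProductSpace ℝ F]

/-- The functional `ζ ↦ ⟪S ∘ (ζ * ·), T⟫_HS` attached to two real-linear maps `ℂ → F`, the
Hilbert–Schmidt inner product being computed in the orthonormal basis `1, I` of `ℂ`. -/
noncomputable def hilbertSchmidtMul (S T : ℂ →L[ℝ] F) : ℂ →L[ℝ] ℝ :=
  innerSL ℝ (T 1) ∘L S + innerSL ℝ (T I) ∘L S ∘L ContinuousLinearMap.mul ℝ ℂ I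

theorem hilbertSchmidtMul_apply (S T : ℂ →L[ℝ] F) (ζ : ℂ) :
    hilbertSchmidtMul S T ζ = ⟪S ζ, T 1⟫ + ⟪S (ζ * I), T I⟫ := by
  simp [hilbertSchmidtMul, real_inner_comm, mul_comm]

theorem hilbertSchmidtMul_self_ofReal (S : ℂ →L[ℝ] F) (r : ℝ) :
    hilbertSchmidtMul S S r = r * (‖S 1‖ ^ 2 + ‖S I‖ ^ 2) := by
  have real_multiple (v : ℂ) : S (r * v) = r • S v := by rw [← map_smul, real_smul]
  have real_value : S r = r • S 1 := by rw [← real_multiple, mul_one]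
  rw [hilbertSchmidtMul_apply, real_multiple, real_value, real_inner_smul_left,
    real_inner_smul_left, real_inner_self_eq_norm_sq, real_inner_self_eq_norm_sq, mul_add]

-- Multiplication by `conj v` is the Hilbert–Schmidt adjoint of multiplication by `v`.
theorem hilbertSchmidtMul_mul_conj (S T : ℂ →L[ℝ] F) (w v : ℂ) :
    hilbertSchmidtMul S T (w * conj v) = ⟪S w, T v⟫ + ⟪S (w * I), T (v * I)⟫ := by
  have expand (R : ℂ →L[ℝ] F) (ζ : ℂ) : R ζ = ζ.re • R 1 + ζ.im • R I := by
    rw [← map_smul, ← map_smul, ← map_add, real_smul, real_smul, mul_one, re_add_im]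
  rw [hilbertSchmidtMul_apply, expand S (w * conj v), expand S (w * conj v * I), expand S w,
    expand S (w * I), expand T v, expand T (v * I)]
  simp only [inner_add_left, inner_add_right, real_inner_smul_left, real_inner_smul_right,
    mul_re, mul_im, I_re, I_im, conj_re, conj_im]
  ring

theorem sum_norm_sq_fderiv_const_add_sum_pow (c : F) (s : Finset ℕ) (T : ℕ → ℂ →L[ℝ] F) (z : ℂ) :
    ∑ i, ‖fderiv ℝ (fun z ↦ c + ∑ n ∈ s, T n (z ^ n)) z (orthonormalBasisOneI i)‖ ^ 2 =
      ∑ n ∈ s, ∑ k ∈ s,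
        hilbertSchmidtMul (T n) (T k) (n * z ^ (n - 1) * conj (k * z ^ (k - 1))) := by
  simp only [fderiv_const_add_sum_pow, Fin.sum_univ_two, coe_orthonormalBasisOneI,
    Matrix.cons_val_zero, Matrix.cons_val_one, mul_one, ← real_inner_self_eq_norm_sq, sum_inner,
    inner_sum, ← Finset.sum_add_distrib, hilbertSchmidtMul_mul_conj]
  exact Finset.sum_comm

theorem setIntegral_ball_sum_norm_sq_fderiv_const_add_sum_pow (c : F) (s : Finset ℕ)
    (T : ℕ → ℂ →L[ℝ] F) {ρ : ℝ} (hρ : 0 ≤ ρ) :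
    ∫ z in ball 0 ρ,
        ∑ i, ‖fderiv ℝ (fun z ↦ c + ∑ n ∈ s, T n (z ^ n)) z (orthonormalBasisOneI i)‖ ^ 2 =
      Real.pi * ∑ n ∈ s, n * ρ ^ (2 * n) * (‖T n 1‖ ^ 2 + ‖T n I‖ ^ 2) := by
  have integrable_pairing (n k : ℕ) :
      IntegrableOn (fun z : ℂ ↦ n * z ^ (n - 1) * conj (k * z ^ (k - 1))) (ball 0 ρ) :=
    (ContinuousOn.integrableOn_compact (isCompact_closedBall 0 ρ) (by fun_prop)).mono_set
      ball_subset_closedBall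
  have integrable_term (n k : ℕ) :=
    (hilbertSchmidtMul (T n) (T k)).integrable_comp (integrable_pairing n k)
  simp only [sum_norm_sq_fderiv_const_add_sum_pow]
  rw [integral_finsetSum s fun n _ ↦ integrable_finsetSum s fun k _ ↦ integrable_term n k,
    Finset.mul_sum]
  refine Finset.sum_congr rfl fun n hn ↦ ?_
  rw [integral_finsetSum s fun k _ ↦ integrable_term n k]
  simp only [ContinuousLinearMap.integral_comp_comm _ (integrable_pairing _ _),
    setIntegral_ball_deriv_pow_mul_conj_deriv_pow _ _ hρ]
  rw [Finset.sum_eq_single_of_mem n hn fun k _ hk ↦ by rw [if_neg hk.symm, map_zero],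
    if_pos rfl, hilbertSchmidtMul_self_ofReal, mul_assoc]

theorem stmt_9_general (N : ℕ) (a b : ℕ → F) {ρ : ℝ} (hρ : 0 ≤ ρ)
    (u : EuclideanSpace ℝ (Fin 2) → F)
    (hu : ∀ x : EuclideanSpace ℝ (Fin 2), u x = a 0 + ∑ n ∈ Finset.Icc 1 N,
        ((((x 0 : ℂ) + (x 1 : ℂ) * Complex.I) ^ n).re • a n +
          (((x 0 : ℂ) + (x 1 : ℂ) * Complex.I) ^ n).im • b n)) :
    ∫ x in ball (0 : EuclideanSpace ℝ (Fin 2)) ρ,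
        ∑ i : Fin 2, ‖fderiv ℝ u x (EuclideanSpace.single i 1)‖ ^ 2 =
      Real.pi * ∑ n ∈ Finset.Icc 1 N, (n : ℝ) * ρ ^ (2 * n) * (‖a n‖ ^ 2 + ‖b n‖ ^ 2) := by
  let T (n : ℕ) : ℂ →L[ℝ] F := reCLM.smulRight (a n) + imCLM.smulRight (b n)
  have u_eq : u = (fun z ↦ a 0 + ∑ n ∈ Finset.Icc 1 N, T n (z ^ n)) ∘
      orthonormalBasisOneI.repr.symm := by
    ext1 x
    simp [hu, T, orthonormalBasisOneI_repr_symm_apply]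
  rw [u_eq, setIntegral_ball_sum_norm_sq_fderiv_comp_repr_symm,
    setIntegral_ball_sum_norm_sq_fderiv_const_add_sum_pow _ _ _ hρ]
  simp [T]

end HarmonicPolynomials

theorem stmt_9 (m N : ℕ) (hm : 1 ≤ m) (a b : ℕ → EuclideanSpace ℝ (Fin m))
    (ρ : ℝ) (hρ : 0 < ρ)
    (u : EuclideanSpace ℝ (Fin 2) → EuclideanSpace ℝ (Fin m))
    (hu : ∀ x : EuclideanSpace ℝ (Fin 2), u x = a 0 + ∑ n ∈ Finset.Icc 1 N,
        ((((x 0 : ℂ) + (x 1 : ℂ) * Complex.I) ^ n).re • a n +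
          (((x 0 : ℂ) + (x 1 : ℂ) * Complex.I) ^ n).im • b n)) :
    ∫ x in Metric.ball (0 : EuclideanSpace ℝ (Fin 2)) ρ,
        ∑ i : Fin 2, ‖fderiv ℝ u x (EuclideanSpace.single i 1)‖ ^ 2 =
      Real.pi * ∑ n ∈ Finset.Icc 1 N, (n : ℝ) * ρ ^ (2 * n) * (‖a n‖ ^ 2 + ‖b n‖ ^ 2) :=
  stmt_9_general N a b hρ.le u hu
end

section
/- Let ν₁, ν₂, p ∈ ℝ³ with ‖ν₁‖ = ‖ν₂‖ = ‖p‖ = 1 and ⟨p, ν₂⟩ = 0. Then there exists q ∈ ℝ³ with ‖q‖ = 1, ⟨q, ν₁⟩ = 0, and ‖p − q‖ ≤ 2 ‖ν₁ − ν₂‖. -/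
open scoped RealInnerProductSpace

/-!
The reflection in the hyperplane orthogonal to `ν₁ + ν₂` exchanges `ν₂` and `-ν₁`, so it maps the
circle orthogonal to `ν₂` onto the circle orthogonal to `ν₁`. It moves `p` by
`2 |⟪p, ν₁ + ν₂⟫| / ‖ν₁ + ν₂‖`. If `θ` is the angle between `ν₁` and `ν₂`, then `|⟪p, ν₁⟫| ≤ sin θ`
because `p ⟂ ν₂`, and `‖ν₁ + ν₂‖ = 2 cos (θ / 2)`, so `p` moves by at most
`2 sin (θ / 2) = ‖ν₁ - ν₂‖`. The constant is thus `1` rather than `2`.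
-/

section

variable {E : Type*} [NormedAddCommGroup E] [InnerProductSpace ℝ E]

theorem reflection_orthogonal_span_add {v w : E} (h : ‖v‖ = ‖w‖) :
    (ℝ ∙ (v + w))ᗮ.reflection w = -v := by
  have h_neg : ‖w‖ = ‖-v‖ := by rw [norm_neg, h]
  simpa only [sub_neg_eq_add, add_comm w v] using Submodule.reflection_sub h_neg

theorem sub_reflection_orthogonal_span_singleton (w p : E) :
    p - (ℝ ∙ w)ᗮ.reflection p = (2 * (⟪w, p⟫ / ‖w‖ ^ 2)) • w := by
  rw [Submodule.reflection_orthogonal_apply, Submodule.reflection_singleton_apply, mul_smul,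
    RCLike.ofReal_real_eq_id, id, two_smul ℕ, two_smul ℝ]
  abel

theorem norm_sub_reflection_orthogonal_span_singleton (w p : E) :
    ‖p - (ℝ ∙ w)ᗮ.reflection p‖ = 2 * |⟪w, p⟫| / ‖w‖ := by
  rw [sub_reflection_orthogonal_span_singleton, norm_smul, Real.norm_eq_abs, abs_mul, abs_div,
    abs_two, abs_of_nonneg (sq_nonneg ‖w‖)]
  rcases eq_or_ne ‖w‖ 0 with hw | hw
  · simp [hw]
  · field_simp

-- Cauchy–Schwarz for `p` and the component of `x` orthogonal to `y`, scaled by `‖y‖ ^ 2`.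
theorem sq_inner_mul_sq_norm_le_of_inner_eq_zero {p y : E} (x : E) (h : ⟪p, y⟫ = 0) :
    ⟪p, x⟫ ^ 2 * ‖y‖ ^ 2 ≤ ‖p‖ ^ 2 * (‖x‖ ^ 2 * ‖y‖ ^ 2 - ⟪x, y⟫ ^ 2) := by
  rcases eq_or_ne y 0 with rfl | hy
  · simp
  set z : E := ‖y‖ ^ 2 • x - ⟪x, y⟫ • y with hz
  have inner_z : ⟪p, z⟫ = ‖y‖ ^ 2 * ⟪p, x⟫ := by
    rw [hz, inner_sub_right, real_inner_smul_right, real_inner_smul_right, h, mul_zero, sub_zero]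
  have norm_z : ‖z‖ ^ 2 = ‖y‖ ^ 2 * (‖x‖ ^ 2 * ‖y‖ ^ 2 - ⟪x, y⟫ ^ 2) := by
    rw [hz, norm_sub_sq_real, real_inner_smul_left, real_inner_smul_right, norm_smul, norm_smul,
      mul_pow, mul_pow, Real.norm_eq_abs, Real.norm_eq_abs, sq_abs, sq_abs]
    ring
  have cauchy_schwarz : ⟪p, z⟫ ^ 2 ≤ ‖p‖ ^ 2 * ‖z‖ ^ 2 := by
    simpa only [sq_abs, mul_pow] using
      pow_le_pow_left₀ (abs_nonneg _) (abs_real_inner_le_norm p z) 2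
  rw [inner_z, norm_z] at cauchy_schwarz
  refine le_of_mul_le_mul_left ?_ (by positivity : 0 < ‖y‖ ^ 2)
  linarith

theorem sq_norm_add_mul_sq_norm_sub {x y : E} (h : ‖x‖ = ‖y‖) :
    ‖x + y‖ ^ 2 * ‖x - y‖ ^ 2 = 4 * (‖x‖ ^ 2 * ‖y‖ ^ 2 - ⟪x, y⟫ ^ 2) := by
  rw [norm_add_sq_real, norm_sub_sq_real, h]
  ring

theorem norm_mul_two_mul_abs_inner_le {p x y : E} (hxy : ‖x‖ = ‖y‖)
    (h : ⟪p, y⟫ = 0) :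
    ‖y‖ * (2 * |⟪p, x⟫|) ≤ ‖p‖ * ‖x - y‖ * ‖x + y‖ := by
  refine le_of_sq_le_sq ?_ (by positivity)
  calc (‖y‖ * (2 * |⟪p, x⟫|)) ^ 2
      = 4 * (⟪p, x⟫ ^ 2 * ‖y‖ ^ 2) := by rw [mul_pow, mul_pow, sq_abs]; ring
    _ ≤ 4 * (‖p‖ ^ 2 * (‖x‖ ^ 2 * ‖y‖ ^ 2 - ⟪x, y⟫ ^ 2)) := by
      exact mul_le_mul_of_nonneg_left (sq_inner_mul_sq_norm_le_of_inner_eq_zero x h) zero_le_four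
    _ = ‖p‖ ^ 2 * (‖x + y‖ ^ 2 * ‖x - y‖ ^ 2) := by rw [sq_norm_add_mul_sq_norm_sub hxy]; ring
    _ = (‖p‖ * ‖x - y‖ * ‖x + y‖) ^ 2 := by ring

theorem norm_mul_norm_sub_reflection_orthogonal_span_add_le {p x y : E} (hxy : ‖x‖ = ‖y‖)
    (h : ⟪p, y⟫ = 0) :
    ‖y‖ * ‖p - (ℝ ∙ (x + y))ᗮ.reflection p‖ ≤ ‖p‖ * ‖x - y‖ := by
  have inner_add : ⟪x + y, p⟫ = ⟪p, x⟫ := by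
    rw [real_inner_comm, inner_add_right, h, add_zero]
  rw [norm_sub_reflection_orthogonal_span_singleton, inner_add, ← mul_div_assoc]
  exact div_le_of_le_mul₀ (norm_nonneg _) (by positivity)
    (norm_mul_two_mul_abs_inner_le hxy h)

theorem inner_reflection_orthogonal_span_add_eq_zero {p x y : E} (hxy : ‖x‖ = ‖y‖)
    (h : ⟪p, y⟫ = 0) : ⟪(ℝ ∙ (x + y))ᗮ.reflection p, x⟫ = 0 := by
  rw [← neg_eq_zero, ← inner_neg_right, ← reflection_orthogonal_span_add hxy,
    LinearIsometryEquiv.inner_map_map, h]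

theorem stmt_13_general {ν₁ ν₂ p : E} (hν : ‖ν₁‖ = ‖ν₂‖) (hpν₂ : ⟪p, ν₂⟫ = 0) :
    ∃ q : E, ‖q‖ = ‖p‖ ∧ ⟪q, ν₁⟫ = 0 ∧ ‖ν₂‖ * ‖p - q‖ ≤ ‖p‖ * ‖ν₁ - ν₂‖ :=
  ⟨(ℝ ∙ (ν₁ + ν₂))ᗮ.reflection p, LinearIsometryEquiv.norm_map _ p,
    inner_reflection_orthogonal_span_add_eq_zero hν hpν₂,
    norm_mul_norm_sub_reflection_orthogonal_span_add_le hν hpν₂⟩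

end

theorem stmt_13 (ν₁ ν₂ p : EuclideanSpace ℝ (Fin 3))
    (hν₁ : ‖ν₁‖ = 1) (hν₂ : ‖ν₂‖ = 1) (hp : ‖p‖ = 1) (hpν₂ : ⟪p, ν₂⟫ = 0) :
    ∃ q : EuclideanSpace ℝ (Fin 3), ‖q‖ = 1 ∧ ⟪q, ν₁⟫ = 0 ∧
      ‖p - q‖ ≤ 2 * ‖ν₁ - ν₂‖ := by
  obtain ⟨q, hq, hqν₁, hpq⟩ := stmt_13_general (hν₁.trans hν₂.symm) hpν₂
  rw [hν₂, hp, one_mul, one_mul] at hpq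
  exact ⟨q, hq.trans hp, hqν₁, by linarith [norm_nonneg (ν₁ - ν₂)]⟩
end

section
/- Let ν₁, ν₂ ∈ ℝ³ be unit vectors and let p ∈ ℝ³. For i = 1, 2 set p′ᵢ := p − ⟨p, νᵢ⟩ νᵢ, and assume ‖p′ᵢ‖ ≥ 1/2 for i = 1, 2. Then ‖ p′₁/‖p′₁‖ − p′₂/‖p′₂‖ ‖ ≤ 8 ‖p‖ ‖ν₁ − ν₂‖. -/
open scoped RealInnerProductSpace

/-!
The orthogonal projections onto the hyperplanes orthogonal to the unit vectors `ν₁` and `ν₂`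
differ in operator norm by the sine of the angle between `ν₁` and `ν₂`, which is at most
`‖ν₁ - ν₂‖`. Radial projection onto the sphere of radius `r` is nonexpansive outside the open ball
of radius `r`, so normalizing vectors of norm at least `r` is `r⁻¹`-Lipschitz. With `r = 1 / 2` this
gives the constant `2` in place of `8`.
-/

open NormedSpace (normalize norm_smul_normalize norm_normalize)

section RealInnerProductSpace

variable {E : Type*} [NormedAddCommGroup E] [InnerProductSpace ℝ E]

theorem norm_sub_sq_eq_norm_normalize_sub_sq (x y : E) :
    ‖x - y‖ ^ 2 = (‖x‖ - ‖y‖) ^ 2 + ‖x‖ * ‖y‖ * ‖normalize x - normalize y‖ ^ 2 := by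
  rcases eq_or_ne x 0 with rfl | hx
  · simp
  rcases eq_or_ne y 0 with rfl | hy
  · simp
  have inner_eq : ⟪x, y⟫ = ‖x‖ * (‖y‖ * ⟪normalize x, normalize y⟫) := by
    rw [← real_inner_smul_right, ← real_inner_smul_left, norm_smul_normalize, norm_smul_normalize]
  rw [norm_sub_sq_real, norm_sub_sq_real, norm_normalize hx, norm_normalize hy, inner_eq]
  ring

theorem mul_norm_normalize_sub_normalize_le {r : ℝ} {x y : E} (hr : 0 ≤ r) (hx : r ≤ ‖x‖)
    (hy : r ≤ ‖y‖) : r * ‖normalize x - normalize y‖ ≤ ‖x - y‖ := by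
  refine le_of_sq_le_sq ?_ (norm_nonneg _)
  calc (r * ‖normalize x - normalize y‖) ^ 2
      = r * r * ‖normalize x - normalize y‖ ^ 2 := by ring
    _ ≤ ‖x‖ * ‖y‖ * ‖normalize x - normalize y‖ ^ 2 := by gcongr
    _ ≤ ‖x - y‖ ^ 2 := by
      rw [norm_sub_sq_eq_norm_normalize_sub_sq x y]
      exact le_add_of_nonneg_left (sq_nonneg _)

theorem inner_sub_inner_smul_sub_inner_smul {ν : E} (hν : ‖ν‖ = 1) (p q : E) :
    ⟪p - ⟪p, ν⟫ • ν, q - ⟪q, ν⟫ • ν⟫ = ⟪p, q⟫ - ⟪p, ν⟫ * ⟪q, ν⟫ := by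
  simp only [inner_sub_left, inner_sub_right, real_inner_smul_left, real_inner_smul_right,
    real_inner_self_eq_norm_sq, hν, real_inner_comm q ν]
  ring

theorem sq_inner_sub_inner_mul_inner_le {ν : E} (hν : ‖ν‖ = 1) (p q : E) :
    (⟪p, q⟫ - ⟪p, ν⟫ * ⟪q, ν⟫) ^ 2 ≤ (‖p‖ ^ 2 - ⟪p, ν⟫ ^ 2) * (‖q‖ ^ 2 - ⟪q, ν⟫ ^ 2) := by
  have cauchy_schwarz := real_inner_mul_inner_self_le (p - ⟪p, ν⟫ • ν) (q - ⟪q, ν⟫ • ν)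
  simpa only [inner_sub_inner_smul_sub_inner_smul hν, real_inner_self_eq_norm_sq, ← sq]
    using cauchy_schwarz

theorem norm_inner_smul_sub_inner_smul_sq_le {ν₁ ν₂ : E} (hν₁ : ‖ν₁‖ = 1) (hν₂ : ‖ν₂‖ = 1)
    (p : E) : ‖⟪p, ν₁⟫ • ν₁ - ⟪p, ν₂⟫ • ν₂‖ ^ 2 ≤ ‖p‖ ^ 2 * (1 - ⟪ν₁, ν₂⟫ ^ 2) := by
  have cauchy_schwarz := sq_inner_sub_inner_mul_inner_le hν₂ p ν₁
  rw [hν₁, one_pow] at cauchy_schwarz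
  calc ‖⟪p, ν₁⟫ • ν₁ - ⟪p, ν₂⟫ • ν₂‖ ^ 2
      = (⟪p, ν₁⟫ - ⟪p, ν₂⟫ * ⟪ν₁, ν₂⟫) ^ 2 + ⟪p, ν₂⟫ ^ 2 * (1 - ⟪ν₁, ν₂⟫ ^ 2) := by
        simp only [norm_sub_sq_real, norm_smul, hν₁, hν₂, mul_one, Real.norm_eq_abs, sq_abs,
          real_inner_smul_left, real_inner_smul_right]
        ring
    _ ≤ (‖p‖ ^ 2 - ⟪p, ν₂⟫ ^ 2) * (1 - ⟪ν₁, ν₂⟫ ^ 2) + ⟪p, ν₂⟫ ^ 2 * (1 - ⟪ν₁, ν₂⟫ ^ 2) := by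
        gcongr
    _ = ‖p‖ ^ 2 * (1 - ⟪ν₁, ν₂⟫ ^ 2) := by ring

theorem one_sub_inner_sq_le_norm_sub_sq {ν₁ ν₂ : E} (hν₁ : ‖ν₁‖ = 1) (hν₂ : ‖ν₂‖ = 1) :
    1 - ⟪ν₁, ν₂⟫ ^ 2 ≤ ‖ν₁ - ν₂‖ ^ 2 := by
  rw [norm_sub_sq_real, hν₁, hν₂]
  linarith [sq_nonneg (1 - ⟪ν₁, ν₂⟫)]

theorem norm_inner_smul_sub_inner_smul_le {ν₁ ν₂ : E} (hν₁ : ‖ν₁‖ = 1) (hν₂ : ‖ν₂‖ = 1)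
    (p : E) : ‖⟪p, ν₁⟫ • ν₁ - ⟪p, ν₂⟫ • ν₂‖ ≤ ‖p‖ * ‖ν₁ - ν₂‖ := by
  refine le_of_sq_le_sq ?_ (by positivity)
  calc ‖⟪p, ν₁⟫ • ν₁ - ⟪p, ν₂⟫ • ν₂‖ ^ 2
      ≤ ‖p‖ ^ 2 * (1 - ⟪ν₁, ν₂⟫ ^ 2) := norm_inner_smul_sub_inner_smul_sq_le hν₁ hν₂ p
    _ ≤ ‖p‖ ^ 2 * ‖ν₁ - ν₂‖ ^ 2 := by gcongr; exact one_sub_inner_sq_le_norm_sub_sq hν₁ hν₂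
    _ = (‖p‖ * ‖ν₁ - ν₂‖) ^ 2 := (mul_pow _ _ _).symm

theorem stmt_14_general {ν₁ ν₂ : E} (hν₁ : ‖ν₁‖ = 1) (hν₂ : ‖ν₂‖ = 1) {p p₁' p₂' : E}
    (hp₁' : p₁' = p - ⟪p, ν₁⟫ • ν₁) (hp₂' : p₂' = p - ⟪p, ν₂⟫ • ν₂) {r : ℝ} (hr : 0 < r)
    (h₁ : r ≤ ‖p₁'‖) (h₂ : r ≤ ‖p₂'‖) :
    ‖‖p₁'‖⁻¹ • p₁' - ‖p₂'‖⁻¹ • p₂'‖ ≤ ‖p‖ * ‖ν₁ - ν₂‖ / r := by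
  rw [le_div_iff₀' hr]
  calc r * ‖normalize p₁' - normalize p₂'‖
      ≤ ‖p₁' - p₂'‖ := mul_norm_normalize_sub_normalize_le hr.le h₁ h₂
    _ = ‖⟪p, ν₁⟫ • ν₁ - ⟪p, ν₂⟫ • ν₂‖ := by
      rw [hp₁', hp₂', sub_sub_sub_cancel_left, norm_sub_rev]
    _ ≤ ‖p‖ * ‖ν₁ - ν₂‖ := norm_inner_smul_sub_inner_smul_le hν₁ hν₂ p

end RealInnerProductSpace

theorem stmt_14 (ν₁ ν₂ : EuclideanSpace ℝ (Fin 3)) (hν₁ : ‖ν₁‖ = 1) (hν₂ : ‖ν₂‖ = 1)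
    (p : EuclideanSpace ℝ (Fin 3)) (p₁' p₂' : EuclideanSpace ℝ (Fin 3))
    (hp₁' : p₁' = p - ⟪p, ν₁⟫ • ν₁) (hp₂' : p₂' = p - ⟪p, ν₂⟫ • ν₂)
    (h₁ : 1 / 2 ≤ ‖p₁'‖) (h₂ : 1 / 2 ≤ ‖p₂'‖) :
    ‖‖p₁'‖⁻¹ • p₁' - ‖p₂'‖⁻¹ • p₂'‖ ≤ 8 * ‖p‖ * ‖ν₁ - ν₂‖ := by
  have sharp := stmt_14_general hν₁ hν₂ hp₁' hp₂' one_half_pos h₁ h₂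
  have nonneg : 0 ≤ ‖p‖ * ‖ν₁ - ν₂‖ := by positivity
  linarith
end
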